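/- Let d ≥ 1, let t > 1, set θ = (t−1)/t, and let ν₀, ν₁ ∈ P₂(ℝ^d). Let ρ_E be a metric extrapolation of (ν₀, ν₁) at time t, and let ρ_P be a backward projection of D^{1/θ}_#ν₁ onto the convex order cone below ν₀. Then there exists a constant-speed minimizing geodesic γ : [0,t] → P₂(ℝ^d) such that γ(0) = ρ_P, γ(1) = ν₁ and γ(t) = ρ_E; moreover, any constant-speed minimizing geodesic γ' : [0,t] → P₂(ℝ^d) with γ'(1) = ν₁ and γ'(t) = ρ_E coincides with γ on all of [0,t] (in particular γ'(0) = ρ_P). -/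

import Mathlib

open MeasureTheory

noncomputable section

variable {V : Type*} [NormedAddCommGroup V] [NormedSpace ℝ V]
  [MeasurableSpace V] [BorelSpace V]

/-- `π` is a coupling of `μ` and `ν`. -/
def IsCoupling (π : Measure (V × V)) (μ ν : Measure V) : Prop :=
  IsProbabilityMeasure π ∧ π.map Prod.fst = μ ∧ π.map Prod.snd = ν

/-- Squared 2-Wasserstein distance, as infimum of quadratic cost over couplings. -/
def W2sq (μ ν : Measure V) : ℝ :=
  sInf {c : ℝ | ∃ π : Measure (V × V), IsCoupling π μ ν ∧ c = ∫ p, ‖p.1 - p.2‖ ^ 2 ∂π}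

/-- The 2-Wasserstein distance. -/
def W2 (μ ν : Measure V) : ℝ := Real.sqrt (W2sq μ ν)

/-- `μ` is a Borel probability measure with finite second moment. -/
def IsP2 (μ : Measure V) : Prop :=
  IsProbabilityMeasure μ ∧ Integrable (fun x => ‖x‖ ^ 2) μ

/-- Convex order: `∫ φ dμ ≤ ∫ φ dν` for every convex `φ` for which both integrals exist. -/
def ConvexOrder (μ ν : Measure V) : Prop :=
  ∀ φ : V → ℝ, ConvexOn ℝ Set.univ φ → Integrable φ μ → Integrable φ ν →
    ∫ x, φ x ∂μ ≤ ∫ x, φ x ∂ν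

/-- `X` is a Borel map, square-integrable w.r.t. `ρ₀`. -/
def MemL2 (ρ₀ : Measure V) (X : V → V) : Prop :=
  Measurable X ∧ Integrable (fun x => ‖X x‖ ^ 2) ρ₀

/-- `μs` is a backward projection of `μ` onto the convex order cone below `ν`. -/
def IsBackwardProj (ν μ μs : Measure V) : Prop :=
  IsP2 μs ∧ ConvexOrder μs ν ∧
    ∀ ρ : Measure V, IsP2 ρ → ConvexOrder ρ ν → W2 μs μ ≤ W2 ρ μ

/-- `ρs` is a forward projection of `ν` above `μ`. -/
def IsForwardProj (μ ν ρs : Measure V) : Prop :=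
  IsP2 ρs ∧ ConvexOrder μ ρs ∧
    ∀ ρ : Measure V, IsP2 ρ → ConvexOrder μ ρ → W2 ρs ν ≤ W2 ρ ν

/-- `ρs` is a metric extrapolation of `(ν₀, ν₁)` at time `t`. -/
def IsMetricExtrap (t : ℝ) (ν₀ ν₁ ρs : Measure V) : Prop :=
  IsP2 ρs ∧ ∀ ρ : Measure V, IsP2 ρ →
    W2sq ρs ν₁ / (2 * (t - 1)) - W2sq ρs ν₀ / (2 * t) ≤
      W2sq ρ ν₁ / (2 * (t - 1)) - W2sq ρ ν₀ / (2 * t)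

/-- Constant-speed minimizing geodesic on `[a,b]` for `W₂`. -/
def IsGeodesic (a b : ℝ) (γ : ℝ → Measure V) : Prop :=
  (∀ s ∈ Set.Icc a b, IsP2 (γ s)) ∧
    ∀ s₁ ∈ Set.Icc a b, ∀ s₂ ∈ Set.Icc a b,
      W2 (γ s₁) (γ s₂) = |s₁ - s₂| / (b - a) * W2 (γ a) (γ b)

/-- Topological support of a measure. -/
def msupport (μ : Measure V) : Set V := {x | ∀ U ∈ nhds x, μ U ≠ 0}

/-- Regular measures: absolutely continuous, compact convex support,
density bounded above and below on the support. -/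
def IsP2reg {d : ℕ} (μ : Measure (EuclideanSpace ℝ (Fin d))) : Prop :=
  IsP2 μ ∧ μ ≪ volume ∧ IsCompact (msupport μ) ∧ Convex ℝ (msupport μ) ∧
    ∃ m M : ℝ, 0 < m ∧ 0 < M ∧
      ∀ᵐ x ∂(volume : Measure (EuclideanSpace ℝ (Fin d))),
        x ∈ msupport μ → m ≤ (μ.rnDeriv volume x).toReal ∧ (μ.rnDeriv volume x).toReal ≤ M


/-!
The proof of `stmt15` avoids disintegration into martingale kernels and works with first-order
optimality conditions. Write `μ` for the dilation of `ν₁` by `1 / θ`, let `(X, Z)` be an optimal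
pair with laws `μ` and `ρP`, and put `X₁ = θ X`, `Y = (t - 1) (X - Z)`. Then `X₁` has law `ν₁` and
`X₁ = Z + (Y - Z) / t`, so `X₁` sits at time `1` on the segment from `Z` (time `0`) to `Y`
(time `t`).

* *Optimality of the projection.* The set of laws below `ν₀` in convex order is stable under
  convex combinations of random variables, for any coupling. Varying `Z` towards a competitor `W`
  gives `E ⟪X - Z, W - Z⟫ ≤ 0` (`IsBackwardProj.integral_inner_nonpos`). Hence `Y` is at least as
  correlated with `Z` as with any variable below `ν₀`. With `W` of law `ν₀` this bounds
  `W₂²(law Y, ν₀)` from below, so that it bounds the extrapolation functional at the law of `Y`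
  from above; with `W` of law `ρP` it shows that `(Z, Y)` is an optimal pair
  (`IsBackwardProj.le_W2sq`).
* *Correlations grow in convex order.* If `ζ ⪯ ν`, the maximal correlation of `ρ` with `ζ` is at
  most that with `ν` (`W2sq_le_of_convexOrder`), since Kantorovich potentials may be taken convex.
  Only the case of a finitely supported `ρ` needs duality; it follows from Hahn–Banach in
  finite dimension (`exists_plan_of_dual`).
* *Completing the square.* Glue an arbitrary optimal plan from `ν₁` to `ρE` to the law of
  `(X₁, Z)`, and let `V` be the variable of law `ρE`. The second point bounds the functional at `ρE`
  from below by its upper bound at the law of `Y` plus a positive multiple of `E ‖V - Y‖²`.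
  As `ρE` is minimal, `V = Y` almost surely (`optimal_eq`). So `ρE` is the law of `Y`, and the
  optimal plan from `ν₁` to `ρE` is unique.
* *Geodesics.* Interpolating the optimal pair `(Z, Y)` gives the required geodesic
  (`isGeodesic_interp`). Equality in the triangle inequality for `W₂` forces alignment
  (`exists_aligned`), so each point of any geodesic is the image, under an affine map, of an
  optimal plan between its values at times `1` and `t` (`IsGeodesic.exists_optimal_map`).
  Uniqueness of that plan determines the geodesic.
-/

section Extrapolation

set_option linter.unusedSectionVars false
open ProbabilityTheory Filter Topology
open scoped ENNReal RealInnerProductSpace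

/-! ### Gluing of plans -/

section Gluing

variable {A B C : Type*} [MeasurableSpace A] [MeasurableSpace B] [MeasurableSpace C]
  [StandardBorelSpace B] [StandardBorelSpace C] [Nonempty B] [Nonempty C]

/-- The gluing lemma: two plans with the same first marginal are marginals of one measure, under
which the other two coordinates are conditionally independent given the first. -/
lemma exists_glue (π₁ : Measure (A × B)) (π₂ : Measure (A × C)) [IsProbabilityMeasure π₁]
    [IsProbabilityMeasure π₂] (h : π₁.map Prod.fst = π₂.map Prod.fst) :
    ∃ Γ : Measure (A × B × C), IsProbabilityMeasure Γ ∧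
      Γ.map (fun p => (p.1, p.2.1)) = π₁ ∧ Γ.map (fun p => (p.1, p.2.2)) = π₂ := by
  have h1 : π₁.fst ⊗ₘ π₁.condKernel = π₁ := π₁.disintegrate π₁.condKernel
  have h2 : π₁.fst ⊗ₘ π₂.condKernel = π₂ := by
    have := π₂.disintegrate π₂.condKernel
    rwa [show π₂.fst = π₁.fst from h.symm] at this
  refine ⟨π₁.fst ⊗ₘ (π₁.condKernel ×ₖ π₂.condKernel), inferInstance, ?_, ?_⟩
  · conv_rhs => rw [← h1]
    have := Measure.compProd_map (μ := π₁.fst) (κ := π₁.condKernel ×ₖ π₂.condKernel)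
      (measurable_fst (α := B) (β := C))
    rw [← Kernel.fst_eq, Kernel.fst_prod] at this
    rw [this]; rfl
  · conv_rhs => rw [← h2]
    have := Measure.compProd_map (μ := π₁.fst) (κ := π₁.condKernel ×ₖ π₂.condKernel)
      (measurable_snd (α := B) (β := C))
    rw [← Kernel.snd_eq, Kernel.snd_prod] at this
    rw [this]; rfl

end Gluing

/-! ### Square-integrable random variables -/

section L2

variable {Ω : Type*} [MeasurableSpace Ω] {P : Measure Ω}
  {E : Type*} [NormedAddCommGroup E] [InnerProductSpace ℝ E]

lemma norm_sq_toLp {X : Ω → E} (hX : MemLp X 2 P) :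
    ‖hX.toLp X‖ ^ 2 = ∫ ω, ‖X ω‖ ^ 2 ∂P := by
  rw [← real_inner_self_eq_norm_sq, L2.inner_def]
  refine integral_congr_ae ?_
  filter_upwards [hX.coeFn_toLp] with ω hω
  rw [hω, real_inner_self_eq_norm_sq]

lemma inner_toLp {X Y : Ω → E} (hX : MemLp X 2 P) (hY : MemLp Y 2 P) :
    ⟪hX.toLp X, hY.toLp Y⟫ = ∫ ω, ⟪X ω, Y ω⟫ ∂P := by
  rw [L2.inner_def]
  refine integral_congr_ae ?_
  filter_upwards [hX.coeFn_toLp, hY.coeFn_toLp] with ω h1 h2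
  rw [h1, h2]

lemma integrable_inner_of_memLp {X Y : Ω → E} (hX : MemLp X 2 P) (hY : MemLp Y 2 P) :
    Integrable (fun ω => ⟪X ω, Y ω⟫) P := by
  refine (L2.integrable_inner (𝕜 := ℝ) (hX.toLp X) (hY.toLp Y)).congr ?_
  filter_upwards [hX.coeFn_toLp, hY.coeFn_toLp] with ω h1 h2
  rw [h1, h2]

lemma integrable_normSq {X : Ω → E} (hX : MemLp X 2 P) : Integrable (fun ω => ‖X ω‖ ^ 2) P :=
  (memLp_two_iff_integrable_sq_norm hX.1).1 hX

lemma abs_integral_inner_le {X Y : Ω → E} (hX : MemLp X 2 P) (hY : MemLp Y 2 P) :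
    |∫ ω, ⟪X ω, Y ω⟫ ∂P| ≤ √(∫ ω, ‖X ω‖ ^ 2 ∂P) * √(∫ ω, ‖Y ω‖ ^ 2 ∂P) := by
  rw [← inner_toLp hX hY, ← norm_sq_toLp hX, ← norm_sq_toLp hY, Real.sqrt_sq (norm_nonneg _),
    Real.sqrt_sq (norm_nonneg _)]
  exact abs_real_inner_le_norm _ _

lemma sqrt_integral_add_le {X Y : Ω → E} (hX : MemLp X 2 P) (hY : MemLp Y 2 P) :
    √(∫ ω, ‖X ω + Y ω‖ ^ 2 ∂P) ≤ √(∫ ω, ‖X ω‖ ^ 2 ∂P) + √(∫ ω, ‖Y ω‖ ^ 2 ∂P) := by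
  have := norm_sq_toLp (hX.add hY)
  simp only [Pi.add_apply] at this
  rw [← norm_sq_toLp hX, ← norm_sq_toLp hY, ← this, Real.sqrt_sq (norm_nonneg _),
    Real.sqrt_sq (norm_nonneg _), Real.sqrt_sq (norm_nonneg _), MemLp.toLp_add]
  exact norm_add_le _ _

lemma integral_normSq_sub {X Y : Ω → E} (hX : MemLp X 2 P) (hY : MemLp Y 2 P) :
    ∫ ω, ‖X ω - Y ω‖ ^ 2 ∂P
      = ∫ ω, ‖X ω‖ ^ 2 ∂P + ∫ ω, ‖Y ω‖ ^ 2 ∂P - 2 * ∫ ω, ⟪X ω, Y ω⟫ ∂P := by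
  have := norm_sub_sq_real (hX.toLp X) (hY.toLp Y)
  rw [norm_sq_toLp, norm_sq_toLp, inner_toLp, ← MemLp.toLp_sub, norm_sq_toLp] at this
  simp only [Pi.sub_apply] at this
  linarith

end L2

/-! ### Couplings and existence of optimal plans -/

section Basics

variable {Ω : Type*} [MeasurableSpace Ω] {P : Measure Ω}
  {E : Type*} [NormedAddCommGroup E] [InnerProductSpace ℝ E] [CompleteSpace E]
  [SecondCountableTopology E] [MeasurableSpace E] [BorelSpace E]

lemma IsP2.isProb {μ : Measure E} (h : IsP2 μ) : IsProbabilityMeasure μ := h.1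

lemma IsCoupling.isProb {π : Measure (E × E)} {μ ν : Measure E} (h : IsCoupling π μ ν) :
    IsProbabilityMeasure π := h.1

lemma isP2_map_iff [IsProbabilityMeasure P] {X : Ω → E} (hX : Measurable X) :
    IsP2 (P.map X) ↔ MemLp X 2 P := by
  rw [memLp_two_iff_integrable_sq_norm hX.aestronglyMeasurable, IsP2,
    integrable_map_measure (by fun_prop) hX.aemeasurable]
  exact ⟨fun h => h.2, fun h => ⟨Measure.isProbabilityMeasure_map hX.aemeasurable, h⟩⟩

lemma isP2_iff_memLp {μ : Measure E} : IsP2 μ ↔ IsProbabilityMeasure μ ∧ MemLp id 2 μ := by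
  rw [memLp_two_iff_integrable_sq_norm measurable_id.aestronglyMeasurable]; rfl

lemma bddBelow_costs (μ ν : Measure E) :
    BddBelow {c : ℝ | ∃ π : Measure (E × E), IsCoupling π μ ν ∧ c = ∫ p, ‖p.1 - p.2‖ ^ 2 ∂π} :=
  ⟨0, by rintro _ ⟨π, -, rfl⟩; positivity⟩

lemma W2sq_le_of_law [IsProbabilityMeasure P] {X Y : Ω → E} (hX : Measurable X)
    (hY : Measurable Y) : W2sq (P.map X) (P.map Y) ≤ ∫ ω, ‖X ω - Y ω‖ ^ 2 ∂P := by
  refine csInf_le (bddBelow_costs _ _) ⟨P.map (fun ω => (X ω, Y ω)), ⟨?_, ?_, ?_⟩, ?_⟩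
  · exact Measure.isProbabilityMeasure_map (by fun_prop)
  · rw [Measure.map_map (by fun_prop) (by fun_prop)]; rfl
  · rw [Measure.map_map (by fun_prop) (by fun_prop)]; rfl
  · rw [integral_map (by fun_prop) (by fun_prop)]

lemma W2sq_nonneg (μ ν : Measure E) : 0 ≤ W2sq μ ν :=
  Real.sInf_nonneg (by rintro _ ⟨π, -, rfl⟩; positivity)

lemma IsCoupling.map_law [IsProbabilityMeasure P] {X Y : Ω → E} (hX : Measurable X)
    (hY : Measurable Y) : IsCoupling (P.map (fun ω => (X ω, Y ω))) (P.map X) (P.map Y) := by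
  refine ⟨Measure.isProbabilityMeasure_map (by fun_prop), ?_, ?_⟩ <;>
  · rw [Measure.map_map (by fun_prop) (by fun_prop)]; rfl

lemma IsCoupling.memLp_fst {π : Measure (E × E)} {μ ν : Measure E} (h : IsCoupling π μ ν)
    (hμ : IsP2 μ) : MemLp (fun p : E × E => p.1) 2 π := by
  have := h.1
  rw [← isP2_map_iff measurable_fst, h.2.1]; exact hμ

lemma IsCoupling.memLp_snd {π : Measure (E × E)} {μ ν : Measure E} (h : IsCoupling π μ ν)
    (hν : IsP2 ν) : MemLp (fun p : E × E => p.2) 2 π := by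
  have := h.1
  rw [← isP2_map_iff measurable_snd, h.2.2]; exact hν

lemma IsCoupling.symm {π : Measure (E × E)} {μ ν : Measure E} (h : IsCoupling π μ ν) :
    IsCoupling (π.map Prod.swap) ν μ := by
  have := h.1
  refine ⟨Measure.isProbabilityMeasure_map (by fun_prop), ?_, ?_⟩
  · rw [Measure.map_map (by fun_prop) (by fun_prop), ← h.2.2]; rfl
  · rw [Measure.map_map (by fun_prop) (by fun_prop), ← h.2.1]; rfl

lemma integral_swap_cost (π : Measure (E × E)) :
    ∫ p, ‖p.1 - p.2‖ ^ 2 ∂(π.map Prod.swap) = ∫ p, ‖p.1 - p.2‖ ^ 2 ∂π := by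
  rw [integral_map (by fun_prop) (by fun_prop)]
  simp [norm_sub_rev]

lemma W2sq_comm (μ ν : Measure E) : W2sq μ ν = W2sq ν μ := by
  have key : ∀ μ ν : Measure E,
      {c : ℝ | ∃ π : Measure (E × E), IsCoupling π μ ν ∧ c = ∫ p, ‖p.1 - p.2‖ ^ 2 ∂π} ⊆
      {c : ℝ | ∃ π : Measure (E × E), IsCoupling π ν μ ∧ c = ∫ p, ‖p.1 - p.2‖ ^ 2 ∂π} := by
    rintro μ ν _ ⟨π, h, rfl⟩
    exact ⟨_, h.symm, (integral_swap_cost π).symm⟩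
  exact congrArg sInf ((key μ ν).antisymm (key ν μ))

/-- Couplings of two fixed measures form a tight, weakly closed set, on which the transport cost
is weakly lower semicontinuous; hence the infimum defining `W2sq` is attained. -/
lemma exists_optimal {μ ν : Measure E} (hμ : IsP2 μ) (hν : IsP2 ν) :
    ∃ π : Measure (E × E), IsCoupling π μ ν ∧ ∫ p, ‖p.1 - p.2‖ ^ 2 ∂π = W2sq μ ν := by
  have := hμ.1
  have := hν.1
  let S : Set (ProbabilityMeasure (E × E)) :=
    {π | (π : Measure (E × E)).map Prod.fst = μ ∧ (π : Measure (E × E)).map Prod.snd = ν}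
  have hS_tight : IsTightMeasureSet {((π : ProbabilityMeasure (E × E)) : Measure (E × E)) | π ∈ S} := by
    apply IsTightMeasureSet.prodMk
    · refine (isTightMeasureSet_singleton (μ := μ)).subset ?_
      rintro _ ⟨_, ⟨π, hπ, rfl⟩, rfl⟩
      exact hπ.1
    · refine (isTightMeasureSet_singleton (μ := ν)).subset ?_
      rintro _ ⟨_, ⟨π, hπ, rfl⟩, rfl⟩
      exact hπ.2
  have hS_closed : IsClosed S := by
    obtain ⟨μ', hμ'⟩ : ∃ μ' : ProbabilityMeasure E, (μ' : Measure E) = μ := ⟨⟨μ, hμ.1⟩, rfl⟩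
    obtain ⟨ν', hν'⟩ : ∃ ν' : ProbabilityMeasure E, (ν' : Measure E) = ν := ⟨⟨ν, hν.1⟩, rfl⟩
    have e : S = (fun π : ProbabilityMeasure (E × E) => π.map measurable_fst.aemeasurable) ⁻¹' {μ'}
        ∩ (fun π : ProbabilityMeasure (E × E) => π.map measurable_snd.aemeasurable) ⁻¹' {ν'} := by
      ext π
      exact and_congr (by rw [Set.mem_preimage, Set.mem_singleton_iff, ← ProbabilityMeasure.toMeasure_injective.eq_iff, ← hμ']; rfl)
        (by rw [Set.mem_preimage, Set.mem_singleton_iff, ← ProbabilityMeasure.toMeasure_injective.eq_iff, ← hν']; rfl)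
    rw [e]
    exact (isClosed_singleton.preimage (ProbabilityMeasure.continuous_map continuous_fst)).inter
      (isClosed_singleton.preimage (ProbabilityMeasure.continuous_map continuous_snd))
  have hS_cpt : IsCompact S := by
    rw [← hS_closed.closure_eq]; exact isCompact_closure_of_isTightMeasureSet hS_tight
  have hS_ne : S.Nonempty :=
    ⟨⟨μ.prod ν, inferInstance⟩, by
      constructor
      · simp
      · simp⟩
  let c : E × E → ℝ≥0∞ := fun p => ENNReal.ofReal (‖p.1 - p.2‖ ^ 2)
  have hlsc : LowerSemicontinuous
      (fun π : ProbabilityMeasure (E × E) => ∫⁻ p, c p ∂(π : Measure (E × E))) := by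
    -- the cost is the supremum of the bounded continuous costs `min (‖x - y‖ ^ 2) n`
    let f : ℕ → (BoundedContinuousFunction (E × E) NNReal) := fun n =>
      BoundedContinuousFunction.mkOfBound
        ⟨fun p => min (Real.toNNReal (‖p.1 - p.2‖ ^ 2)) n, by fun_prop⟩ n (by
          intro x y
          simp only [ContinuousMap.coe_mk, NNReal.dist_eq]
          have h1 : (min (Real.toNNReal (‖x.1 - x.2‖ ^ 2)) (n : NNReal) : NNReal) ≤ n := min_le_right _ _
          have h2 : (min (Real.toNNReal (‖y.1 - y.2‖ ^ 2)) (n : NNReal) : NNReal) ≤ n := min_le_right _ _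
          have h1' : ((min (Real.toNNReal (‖x.1 - x.2‖ ^ 2)) (n : NNReal) : NNReal) : ℝ) ≤ n := by
            exact_mod_cast h1
          have h2' : ((min (Real.toNNReal (‖y.1 - y.2‖ ^ 2)) (n : NNReal) : NNReal) : ℝ) ≤ n := by
            exact_mod_cast h2
          rw [abs_le]
          constructor <;> linarith [NNReal.coe_nonneg (min (Real.toNNReal (‖x.1 - x.2‖ ^ 2)) (n : NNReal)),
            NNReal.coe_nonneg (min (Real.toNNReal (‖y.1 - y.2‖ ^ 2)) (n : NNReal))])
    have hf : ∀ π : ProbabilityMeasure (E × E),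
        ∫⁻ p, c p ∂(π : Measure (E × E)) = ⨆ n, ∫⁻ p, (f n p : ℝ≥0∞) ∂(π : Measure (E × E)) := by
      intro π
      rw [← lintegral_iSup]
      · refine lintegral_congr fun p => ?_
        apply le_antisymm
        · obtain ⟨n, hn⟩ := exists_nat_ge (‖p.1 - p.2‖ ^ 2)
          refine le_iSup_of_le n ?_
          have : f n p = Real.toNNReal (‖p.1 - p.2‖ ^ 2) := by
            show min _ _ = _
            exact min_eq_left (by simpa using hn)
          rw [this]; rfl
        · refine iSup_le fun n => ?_
          show ((min (Real.toNNReal (‖p.1 - p.2‖ ^ 2)) (n : NNReal) : NNReal) : ℝ≥0∞) ≤ _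
          exact ENNReal.coe_le_coe.2 (min_le_left _ _)
      · intro n
        exact (f n).continuous.measurable.coe_nnreal_ennreal
      · intro n m hnm p
        show ((min _ (n : NNReal) : NNReal) : ℝ≥0∞) ≤ ((min _ (m : NNReal) : NNReal) : ℝ≥0∞)
        gcongr
    simp_rw [hf]
    refine lowerSemicontinuous_iSup fun n => Continuous.lowerSemicontinuous ?_
    rw [continuous_iff_continuousAt]
    intro π
    exact (ProbabilityMeasure.tendsto_iff_forall_lintegral_tendsto.1 tendsto_id (f n))
  obtain ⟨π, hπS, hπ⟩ := LowerSemicontinuousOn.exists_isMinOn hS_ne hS_cpt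
    (hlsc.lowerSemicontinuousOn S)
  have hco : IsCoupling (π : Measure (E × E)) μ ν := ⟨inferInstance, hπS.1, hπS.2⟩
  refine ⟨π, hco, le_antisymm ?_ ?_⟩
  · refine le_csInf ⟨_, π, hco, rfl⟩ ?_
    rintro _ ⟨π', hπ', rfl⟩
    have hle : ∫⁻ p, ENNReal.ofReal (‖p.1 - p.2‖ ^ 2) ∂(π : Measure (E × E)) ≤
        ∫⁻ p, ENNReal.ofReal (‖p.1 - p.2‖ ^ 2) ∂π' :=
      hπ (show (⟨π', hπ'.isProb⟩ : ProbabilityMeasure (E × E)) ∈ S from ⟨hπ'.2.1, hπ'.2.2⟩)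
    have h1 : Integrable (fun p => ‖p.1 - p.2‖ ^ 2) (π : Measure (E × E)) :=
      integrable_normSq ((hco.memLp_fst hμ).sub (hco.memLp_snd hν))
    have h2 : Integrable (fun p => ‖p.1 - p.2‖ ^ 2) π' :=
      integrable_normSq ((hπ'.memLp_fst hμ).sub (hπ'.memLp_snd hν))
    rw [← ofReal_integral_eq_lintegral_ofReal h1 (ae_of_all _ fun _ => by positivity),
      ← ofReal_integral_eq_lintegral_ofReal h2 (ae_of_all _ fun _ => by positivity),
      ENNReal.ofReal_le_ofReal_iff (by positivity)] at hle
    exact hle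
  · exact csInf_le (bddBelow_costs _ _) ⟨_, hco, rfl⟩

end Basics

/-! ### Triangle inequality for `W₂` and its equality case -/

section Geodesics

variable {E : Type*} [NormedAddCommGroup E] [InnerProductSpace ℝ E] [CompleteSpace E]
  [SecondCountableTopology E] [MeasurableSpace E] [BorelSpace E]

lemma integral_map_cost {Ω : Type*} [MeasurableSpace Ω] {P : Measure Ω} {X Y : Ω → E}
    (hX : Measurable X) (hY : Measurable Y) :
    ∫ p, ‖p.1 - p.2‖ ^ 2 ∂(P.map fun ω => (X ω, Y ω)) = ∫ ω, ‖X ω - Y ω‖ ^ 2 ∂P :=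
  integral_map (by fun_prop) (by fun_prop)

/-- Two optimal plans with common first marginal, glued along it: the law of a triple
`(x, (y, z))` for which `(x, y)` and `(x, z)` are both optimally coupled. -/
lemma exists_glue_optimal {μ ν ρ : Measure E} (hμ : IsP2 μ) (hν : IsP2 ν) (hρ : IsP2 ρ) :
    ∃ Γ : Measure (E × E × E), IsProbabilityMeasure Γ ∧
      Γ.map (fun p => p.1) = μ ∧ Γ.map (fun p => p.2.1) = ν ∧ Γ.map (fun p => p.2.2) = ρ ∧
      ∫ p, ‖p.1 - p.2.1‖ ^ 2 ∂Γ = W2sq μ ν ∧ ∫ p, ‖p.1 - p.2.2‖ ^ 2 ∂Γ = W2sq μ ρ := by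
  obtain ⟨π₁, h₁, e₁⟩ := exists_optimal hμ hν
  obtain ⟨π₂, h₂, e₂⟩ := exists_optimal hμ hρ
  have := h₁.isProb
  have := h₂.isProb
  obtain ⟨Γ, hΓ, g₁, g₂⟩ := exists_glue π₁ π₂ (h₁.2.1.trans h₂.2.1.symm)
  refine ⟨Γ, hΓ, ?_, ?_, ?_, ?_, ?_⟩
  · rw [← h₁.2.1, ← g₁, Measure.map_map (by fun_prop) (by fun_prop)]; rfl
  · rw [← h₁.2.2, ← g₁, Measure.map_map (by fun_prop) (by fun_prop)]; rfl
  · rw [← h₂.2.2, ← g₂, Measure.map_map (by fun_prop) (by fun_prop)]; rfl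
  · rw [← e₁, ← g₁, integral_map_cost (by fun_prop) (by fun_prop)]
  · rw [← e₂, ← g₂, integral_map_cost (by fun_prop) (by fun_prop)]

lemma memLp_of_law {Ω : Type*} [MeasurableSpace Ω] {P : Measure Ω} [IsProbabilityMeasure P]
    {X : Ω → E} {μ : Measure E} (hX : Measurable X) (h : P.map X = μ) (hμ : IsP2 μ) :
    MemLp X 2 P := (isP2_map_iff hX).1 (h ▸ hμ)

lemma W2_triangle {μ ν ρ : Measure E} (hμ : IsP2 μ) (hν : IsP2 ν) (hρ : IsP2 ρ) :
    W2 ν ρ ≤ W2 ν μ + W2 μ ρ := by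
  obtain ⟨Γ, hΓ, m₁, m₂, m₃, e₁, e₂⟩ := exists_glue_optimal hμ hν hρ
  have l₁ := memLp_of_law (by fun_prop) m₁ hμ
  have l₂ := memLp_of_law (by fun_prop) m₂ hν
  have l₃ := memLp_of_law (by fun_prop) m₃ hρ
  have h := sqrt_integral_add_le (l₂.sub l₁) (l₁.sub l₃)
  simp only [Pi.sub_apply, sub_add_sub_cancel] at h
  have h' := W2sq_le_of_law (P := Γ) (X := fun p => p.2.1) (Y := fun p => p.2.2)
    (by fun_prop) (by fun_prop)
  rw [m₂, m₃] at h'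
  rw [e₂] at h
  simp_rw [norm_sub_rev (_ : E × E × E).2.1 (_ : E × E × E).1] at h
  rw [e₁, W2sq_comm] at h
  exact (Real.sqrt_le_sqrt h').trans h

/-- Equality in the triangle inequality forces alignment: if `μ₂` sits between `μ₁` and `μ₃` at
distances proportional to `a` and `b`, then all three are marginals of a plan concentrated on
aligned triples, whose `(μ₁, μ₃)` marginal is optimal as well. Triples are ordered as
`(x₂, (x₁, x₃))`. -/
lemma exists_aligned {μ₁ μ₂ μ₃ : Measure E} (h₁ : IsP2 μ₁) (h₂ : IsP2 μ₂) (h₃ : IsP2 μ₃)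
    {a b k : ℝ} (ha : 0 ≤ a) (hb : 0 ≤ b) (hk : 0 ≤ k) (h12 : W2sq μ₂ μ₁ = a ^ 2 * k)
    (h23 : W2sq μ₂ μ₃ = b ^ 2 * k) (h13 : W2sq μ₁ μ₃ = (a + b) ^ 2 * k) :
    ∃ Γ : Measure (E × E × E), IsProbabilityMeasure Γ ∧
      Γ.map (fun p => p.1) = μ₂ ∧ Γ.map (fun p => p.2.1) = μ₁ ∧ Γ.map (fun p => p.2.2) = μ₃ ∧
      (∀ᵐ p ∂Γ, b • (p.2.1 - p.1) + a • (p.2.2 - p.1) = 0) ∧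
      ∫ p, ‖p.1 - p.2.1‖ ^ 2 ∂Γ = W2sq μ₂ μ₁ ∧ ∫ p, ‖p.1 - p.2.2‖ ^ 2 ∂Γ = W2sq μ₂ μ₃ ∧
      ∫ p, ‖p.2.1 - p.2.2‖ ^ 2 ∂Γ = W2sq μ₁ μ₃ := by
  obtain ⟨Γ, hΓ, m₂, m₁, m₃, e₁, e₃⟩ := exists_glue_optimal h₂ h₁ h₃
  have l₁ := memLp_of_law (by fun_prop) m₁ h₁
  have l₂ := memLp_of_law (by fun_prop) m₂ h₂
  have l₃ := memLp_of_law (by fun_prop) m₃ h₃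
  have hC : MemLp (fun p : E × E × E => p.2.1 - p.1) 2 Γ := l₁.sub l₂
  have hB : MemLp (fun p : E × E × E => p.2.2 - p.1) 2 Γ := l₃.sub l₂
  have eC : ∫ p, ‖p.2.1 - p.1‖ ^ 2 ∂Γ = a ^ 2 * k := by
    rw [← h12, ← e₁]; simp_rw [norm_sub_rev]
  have eB : ∫ p, ‖p.2.2 - p.1‖ ^ 2 ∂Γ = b ^ 2 * k := by
    rw [← h23, ← e₃]; simp_rw [norm_sub_rev]
  have eCB := integral_normSq_sub hC hB
  simp only [sub_sub_sub_cancel_right] at eCB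
  have hle := W2sq_le_of_law (P := Γ) (X := fun p => p.2.1) (Y := fun p => p.2.2)
    (by fun_prop) (by fun_prop)
  rw [m₁, m₃, h13, eCB, eC, eB] at hle
  set J := ∫ p, ⟪p.2.1 - p.1, p.2.2 - p.1⟫ ∂Γ with hJ
  have hJle : J ≤ -(a * b * k) := by nlinarith
  have hcs := abs_integral_inner_le hC hB
  rw [eC, eB, ← Real.sqrt_mul (by positivity),
    show a ^ 2 * k * (b ^ 2 * k) = (a * b * k) ^ 2 by ring, Real.sqrt_sq (by positivity)] at hcs
  have hJeq : J = -(a * b * k) := le_antisymm hJle (abs_le.1 hcs).1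
  refine ⟨Γ, hΓ, m₂, m₁, m₃, ?_, e₁, e₃, ?_⟩
  · have hD : MemLp (fun p : E × E × E => b • (p.2.1 - p.1) + a • (p.2.2 - p.1)) 2 Γ :=
      (hC.const_smul b).add (hB.const_smul a)
    have h0 : ∫ p, ‖b • (p.2.1 - p.1) + a • (p.2.2 - p.1)‖ ^ 2 ∂Γ = 0 := by
      have := integral_normSq_sub (hC.const_smul b) (hB.const_smul (-a))
      simp only [Pi.smul_apply, neg_smul, sub_neg_eq_add, inner_neg_right, norm_neg, norm_smul,
        mul_pow, inner_smul_left, inner_smul_right, integral_const_mul, integral_neg,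
        Real.norm_eq_abs, sq_abs, conj_trivial] at this
      rw [this, eC, eB, ← hJ, hJeq]
      ring
    have := (integral_eq_zero_iff_of_nonneg (fun _ => by positivity) (integrable_normSq hD)).1 h0
    filter_upwards [this] with p hp
    simpa using hp
  · rw [eCB, eC, eB, hJeq, h13]; ring

end Geodesics

/-! ### Optimality of the backward projection -/

section Projection

variable {E : Type*} [NormedAddCommGroup E] [InnerProductSpace ℝ E] [FiniteDimensional ℝ E]
  [MeasurableSpace E] [BorelSpace E]

/-- It suffices to test the convex order on convex functions integrable with respect to every
measure with finite second moment: each convex function is the increasing limit of maxima of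
finitely many affine functions. -/
lemma convexOrder_of_forall {μ ν : Measure E} (hμ : IsP2 μ) (hν : IsP2 ν)
    (h : ∀ φ : E → ℝ, ConvexOn ℝ Set.univ φ → (∀ m : Measure E, IsP2 m → Integrable φ m) →
      ∫ x, φ x ∂μ ≤ ∫ x, φ x ∂ν) : ConvexOrder μ ν := by
  intro φ hφ hφμ hφν
  have hcont : Continuous φ := by
    rw [← continuousOn_univ]; exact hφ.continuousOn isOpen_univ
  obtain ⟨l, c, hle, hsup⟩ := hφ.univ_sSup_of_nat_affine_eq (𝕜 := ℝ) hcont.lowerSemicontinuous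
  let g : ℕ → E → ℝ := fun i x => l i x + c i
  have hgle : ∀ i, g i ≤ φ := fun i x => by simpa using! hle i x
  have hgconv : ∀ i, ConvexOn ℝ Set.univ (g i) := fun i =>
    ((l i).toLinearMap.convexOn convex_univ).add (convexOn_const _ convex_univ)
  have hgint : ∀ i, ∀ m : Measure E, IsP2 m → Integrable (g i) m := by
    intro i m hm
    have := hm.isProb
    have hid : Integrable (fun x : E => x) m := (isP2_iff_memLp.1 hm).2.integrable (by norm_num)
    exact ((l i).integrable_comp hid).add (integrable_const _)
  have hstep : ∀ n, partialSups g (n + 1) = partialSups g n ⊔ g (n + 1) := fun n =>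
    partialSups_succ g n
  have hFconv : ∀ n, ConvexOn ℝ Set.univ (partialSups g n) := by
    intro n
    induction n with
    | zero => simpa using hgconv 0
    | succ n ih => rw [hstep]; exact ih.sup (hgconv _)
  have hFint : ∀ n, ∀ m : Measure E, IsP2 m → Integrable (partialSups g n) m := by
    intro n m hm
    induction n with
    | zero => simpa using hgint 0 m hm
    | succ n ih => rw [hstep]; exact ih.sup (hgint _ m hm)
  have hFle : ∀ n, partialSups g n ≤ φ := fun n => partialSups_le _ _ _ fun i _ => hgle i
  have hFmono : ∀ x, Monotone fun n => partialSups g n x := fun x n m hnm =>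
    (partialSups g).monotone hnm x
  have hFlim : ∀ x, Tendsto (fun n => partialSups g n x) atTop (𝓝 (φ x)) := by
    intro x
    have hlub : IsLUB (Set.range fun n => partialSups g n x) (φ x) := by
      refine ⟨?_, ?_⟩
      · rintro _ ⟨n, rfl⟩; exact hFle n x
      · intro b hb
        have hx := congrFun hsup x
        rw [iSup_apply] at hx
        rw [← hx]
        refine ciSup_le fun n => ?_
        refine le_trans ?_ (hb ⟨n, rfl⟩)
        simpa using! le_partialSups g n x
    exact tendsto_atTop_isLUB (hFmono x) hlub
  have hlim := integral_tendsto_of_tendsto_of_monotone (fun n => hFint n μ hμ) hφμ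
    (ae_of_all _ hFmono) (ae_of_all _ hFlim)
  refine le_of_tendsto' hlim fun n => ?_
  exact (h _ (hFconv n) (hFint n)).trans (integral_mono (hFint n ν hν) hφν (hFle n))

/-- First-order optimality of the backward projection: the cone below `ν` is convex along
arbitrary couplings, so the segment from `Z` to any competitor `W` may be used as a variation. -/
lemma IsBackwardProj.integral_inner_nonpos {Ω : Type*} [MeasurableSpace Ω] {P : Measure Ω}
    [IsProbabilityMeasure P] {ν μ ρ : Measure E} (hν : IsP2 ν) (hμ : IsP2 μ)
    (h : IsBackwardProj ν μ ρ) {X Z W : Ω → E} (hX : Measurable X) (hZ : Measurable Z)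
    (hW : Measurable W) (lX : P.map X = μ) (lZ : P.map Z = ρ)
    (hopt : ∫ ω, ‖Z ω - X ω‖ ^ 2 ∂P = W2sq ρ μ) (hW2 : IsP2 (P.map W))
    (hWν : ConvexOrder (P.map W) ν) : ∫ ω, ⟪X ω - Z ω, W ω - Z ω⟫ ∂P ≤ 0 := by
  have mX := memLp_of_law hX lX hμ
  have mZ := memLp_of_law hZ lZ h.1
  have mW := (isP2_map_iff hW).1 hW2
  set I := ∫ ω, ⟪X ω - Z ω, W ω - Z ω⟫ ∂P with hI
  set N := ∫ ω, ‖W ω - Z ω‖ ^ 2 ∂P with hN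
  have key : ∀ s : ℝ, 0 < s → s ≤ 1 → 2 * I ≤ s * N := by
    intro s hs hs1
    have hV : Measurable fun ω => (1 - s) • Z ω + s • W ω := by fun_prop
    have mV : MemLp (fun ω => (1 - s) • Z ω + s • W ω) 2 P :=
      (mZ.const_smul (1 - s)).add (mW.const_smul s)
    have hV2 := (isP2_map_iff hV).2 mV
    have hVν : ConvexOrder (P.map fun ω => (1 - s) • Z ω + s • W ω) ν := by
      refine convexOrder_of_forall hV2 hν fun φ hφ hint => ?_
      have hφc : Continuous φ := by
        rw [← continuousOn_univ]; exact hφ.continuousOn isOpen_univ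
      have iV : Integrable (fun ω => φ ((1 - s) • Z ω + s • W ω)) P :=
        (integrable_map_measure hφc.aestronglyMeasurable hV.aemeasurable).1 (hint _ hV2)
      have iW : Integrable (fun ω => φ (W ω)) P :=
        (integrable_map_measure hφc.aestronglyMeasurable hW.aemeasurable).1 (hint _ hW2)
      have iZ : Integrable (fun ω => φ (Z ω)) P :=
        (integrable_map_measure hφc.aestronglyMeasurable hZ.aemeasurable).1
        (hint _ (lZ ▸ h.1))
      have jZ := h.2.1 φ hφ (hint _ h.1) (hint _ hν)
      have jW := hWν φ hφ (hint _ hW2) (hint _ hν)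
      rw [← lZ, integral_map hZ.aemeasurable hφc.aestronglyMeasurable] at jZ
      rw [integral_map hW.aemeasurable hφc.aestronglyMeasurable] at jW
      rw [integral_map hV.aemeasurable hφc.aestronglyMeasurable]
      calc ∫ ω, φ ((1 - s) • Z ω + s • W ω) ∂P
          ≤ ∫ ω, ((1 - s) * φ (Z ω) + s * φ (W ω)) ∂P := by
            refine integral_mono iV ((iZ.const_mul _).add (iW.const_mul _)) fun ω => ?_
            exact hφ.2 (Set.mem_univ _) (Set.mem_univ _) (by linarith) hs.le (by ring)
        _ = (1 - s) * ∫ ω, φ (Z ω) ∂P + s * ∫ ω, φ (W ω) ∂P := by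
            rw [integral_add (iZ.const_mul _) (iW.const_mul _), integral_const_mul,
              integral_const_mul]
        _ ≤ ∫ x, φ x ∂ν := by nlinarith
    have hmin := h.2.2 _ hV2 hVν
    rw [W2, W2, Real.sqrt_le_sqrt_iff (W2sq_nonneg _ _), ← hopt, ← lX] at hmin
    have hle := hmin.trans (W2sq_le_of_law (P := P) hV hX)
    have e1 := integral_normSq_sub ((mW.sub mZ).const_smul s) (mX.sub mZ)
    simp only [Pi.smul_apply, Pi.sub_apply, norm_smul, mul_pow, inner_smul_left,
      integral_const_mul, Real.norm_eq_abs, sq_abs, conj_trivial] at e1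
    have e2 : ∀ ω, s • (W ω - Z ω) - (X ω - Z ω) = (1 - s) • Z ω + s • W ω - X ω := by
      intro ω; module
    simp_rw [e2] at e1
    rw [e1] at hle
    simp_rw [real_inner_comm (X _ - Z _) (W _ - Z _)] at hle
    simp_rw [norm_sub_rev (Z _) (X _)] at hle
    rw [← hI, ← hN] at hle
    have : s * (2 * I) ≤ s * (s * N) := by nlinarith
    exact le_of_mul_le_mul_left this hs
  by_contra hpos
  push Not at hpos
  have hN0 : 0 ≤ N := by positivity
  have h1 := key (min 1 (I / (N + 1))) (lt_min one_pos (by positivity)) (min_le_left _ _)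
  have h2 : min 1 (I / (N + 1)) * N ≤ I / (N + 1) * N :=
    mul_le_mul_of_nonneg_right (min_le_right _ _) hN0
  have h3 : I / (N + 1) * N ≤ I := by
    rw [div_mul_eq_mul_div, div_le_iff₀ (by positivity)]; nlinarith
  linarith

end Projection

/-! ### Semidiscrete duality -/

section SemiDiscrete

variable {E : Type*} [NormedAddCommGroup E] [InnerProductSpace ℝ E] [CompleteSpace E]
  [SecondCountableTopology E] [MeasurableSpace E] [BorelSpace E]
  {ι : Type*} [Fintype ι] [Nonempty ι] [MeasurableSpace ι] [MeasurableSingletonClass ι]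

/-- A measurable selection of a maximiser among finitely many measurable functions. -/
lemma exists_argmax {f : ι → E → ℝ} (hf : ∀ i, Measurable (f i)) :
    ∃ m : E → ι, Measurable m ∧ ∀ j z, f j z ≤ f (m z) z := by
  classical
  have key : ∀ s : Finset ι, ∃ m : E → ι, Measurable m ∧ ∀ j ∈ s, ∀ z, f j z ≤ f (m z) z := by
    intro s
    induction s using Finset.induction_on with
    | empty => exact ⟨fun _ => Classical.arbitrary ι, measurable_const, by simp⟩
    | insert i s _ ih =>
      obtain ⟨m, hm, h⟩ := ih
      have hfm : Measurable fun z => f (m z) z :=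
        (measurable_from_prod_countable_right (f := fun q : ι × E => f q.1 q.2) hf).comp
          (hm.prodMk measurable_id)
      refine ⟨fun z => if f (m z) z ≤ f i z then i else m z,
        Measurable.ite (measurableSet_le hfm (hf i)) measurable_const hm, ?_⟩
      intro j hj z
      dsimp only
      rcases Finset.mem_insert.1 hj with rfl | hj
      · split_ifs with hc <;> [exact le_rfl; exact (not_le.1 hc).le]
      · split_ifs with hc <;> [exact (h j hj z).trans hc; exact h j hj z]
  obtain ⟨m, hm, h⟩ := key Finset.univ
  exact ⟨m, hm, fun j z => h j (Finset.mem_univ j) z⟩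

lemma memLp_of_finite {Ω : Type*} [MeasurableSpace Ω] {P : Measure Ω} [IsProbabilityMeasure P]
    (y : ι → E) {I : Ω → ι} (hI : Measurable I) : MemLp (fun ω => y (I ω)) 2 P := by
  obtain ⟨C, hC⟩ := (Set.finite_range fun i => ‖y i‖).bddAbove
  exact MemLp.of_bound ((measurable_of_finite y).comp hI).aestronglyMeasurable C
    (ae_of_all _ fun ω => hC ⟨I ω, rfl⟩)

lemma integral_comp_finite {Ω : Type*} [MeasurableSpace Ω] {P : Measure Ω}
    [IsProbabilityMeasure P] (g : ι → ℝ) {I : Ω → ι} (hI : Measurable I) :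
    ∫ ω, g (I ω) ∂P = ∑ i, P.real (I ⁻¹' {i}) * g i := by
  have := Measure.isProbabilityMeasure_map (μ := P) hI.aemeasurable
  rw [← integral_map hI.aemeasurable (f := g) (measurable_of_finite g).aestronglyMeasurable,
    integral_fintype (Integrable.of_finite)]
  refine Finset.sum_congr rfl fun i _ => ?_
  rw [map_measureReal_apply hI (measurableSet_singleton i), smul_eq_mul]

/-- The pairs (first marginal, lower bound on the correlation with `y`) realised by plans on
`ι × E` with second marginal `ν`. -/
def planSet (y : ι → E) (ν : Measure E) : Set ((ι → ℝ) × ℝ) :=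
  {a | ∃ σ : Measure (ι × E), IsProbabilityMeasure σ ∧ σ.map Prod.snd = ν ∧
    (∀ i, σ.real (Prod.fst ⁻¹' {i}) = a.1 i) ∧ a.2 ≤ ∫ q, ⟪y q.1, q.2⟫ ∂σ}

lemma integrable_plan (y : ι → E) {ν : Measure E} (hν : IsP2 ν) {σ : Measure (ι × E)}
    [IsProbabilityMeasure σ] (h : σ.map Prod.snd = ν) :
    Integrable (fun q : ι × E => ⟪y q.1, q.2⟫) σ :=
  integrable_inner_of_memLp (memLp_of_finite y measurable_fst) (memLp_of_law measurable_snd h hν)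

lemma convex_planSet (y : ι → E) {ν : Measure E} (hν : IsP2 ν) : Convex ℝ (planSet y ν) := by
  rintro ⟨q₁, c₁⟩ ⟨σ₁, p₁, m₁, f₁, i₁⟩ ⟨q₂, c₂⟩ ⟨σ₂, p₂, m₂, f₂, i₂⟩ a b ha hb hab
  have hab' : ENNReal.ofReal a + ENNReal.ofReal b = 1 := by
    rw [← ENNReal.ofReal_add ha hb, hab, ENNReal.ofReal_one]
  refine ⟨ENNReal.ofReal a • σ₁ + ENNReal.ofReal b • σ₂, ⟨by simp [hab']⟩, ?_, ?_, ?_⟩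
  · rw [Measure.map_add _ _ measurable_snd, Measure.map_smul, Measure.map_smul, m₁, m₂,
      ← add_smul, hab', one_smul]
  · intro i
    rw [measureReal_add_apply (by simp [ENNReal.mul_eq_top]) (by simp [ENNReal.mul_eq_top])]
    simp only [measureReal_ennreal_smul_apply, f₁, f₂, ENNReal.toReal_ofReal ha,
      ENNReal.toReal_ofReal hb]
    rfl
  · rw [integral_add_measure ((integrable_plan y hν m₁).smul_measure ENNReal.ofReal_ne_top)
      ((integrable_plan y hν m₂).smul_measure ENNReal.ofReal_ne_top), integral_smul_measure,
      integral_smul_measure, ENNReal.toReal_ofReal ha, ENNReal.toReal_ofReal hb]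
    exact add_le_add (mul_le_mul_of_nonneg_left i₁ ha) (mul_le_mul_of_nonneg_left i₂ hb)

lemma mem_planSet (y : ι → E) {ν : Measure E} (hν : IsP2 ν) {m : E → ι} (hm : Measurable m) :
    ((fun i => ν.real (m ⁻¹' {i}), ∫ z, ⟪y (m z), z⟫ ∂ν) : (ι → ℝ) × ℝ) ∈ planSet y ν := by
  have := hν.isProb
  have hg : Measurable fun z => (m z, z) := hm.prodMk measurable_id
  have hp := Measure.isProbabilityMeasure_map (μ := ν) hg.aemeasurable
  have hs : (ν.map fun z => (m z, z)).map Prod.snd = ν := by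
    rw [Measure.map_map measurable_snd hg]; exact Measure.map_id
  refine ⟨ν.map fun z => (m z, z), hp, hs, fun i => ?_, ?_⟩
  · rw [map_measureReal_apply hg (measurable_fst (measurableSet_singleton i))]; rfl
  · rw [integral_map hg.aemeasurable (integrable_plan y hν hs).1]

lemma planSet_mono {y : ι → E} {ν : Measure E} {q : ι → ℝ} {c c' : ℝ} (h : (q, c) ∈ planSet y ν)
    (hc : c' ≤ c) : (q, c') ∈ planSet y ν := by
  obtain ⟨σ, h1, h2, h3, h4⟩ := h
  exact ⟨σ, h1, h2, h3, hc.trans h4⟩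

/-- Independent plans. -/
lemma product_mem_planSet (y : ι → E) {ν : Measure E} (hν : IsP2 ν) {r : ι → ℝ}
    (hr : ∀ i, 0 ≤ r i) (hr1 : ∑ i, r i = 1) :
    (r, ∑ i, r i * ∫ z, ⟪y i, z⟫ ∂ν) ∈ planSet y ν := by
  classical
  have := hν.isProb
  have h := (convex_planSet y hν).sum_mem (t := Finset.univ) (w := r)
    (z := fun i => (Pi.single i 1, ∫ z, ⟪y i, z⟫ ∂ν)) (fun i _ => hr i) hr1 (fun i _ => by
      convert mem_planSet y hν (m := fun _ => i) measurable_const using 2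
      ext j
      by_cases hij : i = j
      · subst hij; simp
      · have : (fun _ : E => i) ⁻¹' {j} = ∅ := by ext; simp [hij]
        rw [this]; simp [Ne.symm hij])
  convert h using 1
  ext i
  · simp [Prod.fst_sum, Finset.sum_apply, Pi.single_apply]
  · simp [Prod.snd_sum]

/-- Semidiscrete Kantorovich duality, in the inequality needed here: a lower bound `D` on every
dual value is, up to `ε`, a lower bound on the correlation of some plan with first marginal `p`. -/
lemma exists_plan_of_dual (y : ι → E) {ν : Measure E} (hν : IsP2 ν) {p : ι → ℝ}
    (hp : ∀ i, 0 < p i) (hp1 : ∑ i, p i = 1) {D : ℝ}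
    (H : ∀ (g : ι → ℝ) (m : E → ι), Measurable m →
      (∀ j z, ⟪y j, z⟫ - g j ≤ ⟪y (m z), z⟫ - g (m z)) →
      D ≤ ∑ i, p i * g i + ∫ z, (⟪y (m z), z⟫ - g (m z)) ∂ν)
    {ε : ℝ} (hε : 0 < ε) : (p, D - ε) ∈ planSet y ν := by
  classical
  have := hν.isProb
  have hcl : (p, D) ∈ closure (planSet y ν) := by
    by_contra hnot
    obtain ⟨f, u, hlt, hu⟩ :=
      geometric_hahn_banach_closed_point (convex_planSet y hν).closure isClosed_closure hnot
    set l := f (0, 1) with hl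
    set F : ι → ℝ := fun i => f (Pi.single i 1, 0) with hF
    have hf : ∀ q c, f (q, c) = ∑ i, q i * F i + c * l := by
      intro q c
      have e : (q, c) = ∑ i, q i • ((Pi.single i 1, 0) : (ι → ℝ) × ℝ)
          + c • ((0, 1) : (ι → ℝ) × ℝ) := by
        ext i
        · simp [Prod.fst_sum, Finset.sum_apply, Pi.single_apply]
        · simp [Prod.snd_sum]
      rw [e, map_add, map_sum]
      simp only [map_smul, smul_eq_mul, hF, hl]
    have hl0 : 0 < l := by
      have h1 := planSet_mono (product_mem_planSet y hν (fun i => (hp i).le) hp1)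
        (min_le_left _ (D - 1))
      have h2 := (hlt _ (subset_closure h1)).trans hu
      rw [hf, hf] at h2
      have h3 := min_le_right (∑ i, p i * ∫ z, ⟪y i, z⟫ ∂ν) (D - 1)
      by_contra hneg
      nlinarith
    obtain ⟨m, hm, hmax⟩ := exists_argmax (f := fun i z => ⟪y i, z⟫ - -(F i / l))
      (fun i => by fun_prop)
    have h1 := H (fun i => -(F i / l)) m hm hmax
    have h2 := (hlt _ (subset_closure (mem_planSet y hν hm))).trans hu
    rw [hf, hf, ← integral_comp_finite F hm] at h2
    have i1 : Integrable (fun z => ⟪y (m z), z⟫) ν :=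
      integrable_inner_of_memLp (memLp_of_finite y hm) (isP2_iff_memLp.1 hν).2
    have i2 : Integrable (fun z => F (m z)) ν := by
      have := (memLp_of_finite F hm (P := ν)).integrable (by norm_num)
      exact this
    have i3 : Integrable (fun z => -(F (m z) / l)) ν := (i2.div_const l).neg
    rw [integral_sub i1 i3, integral_neg, integral_div] at h1
    simp only [mul_neg, Finset.sum_neg_distrib, mul_div_assoc', ← Finset.sum_div] at h1
    have h3 := mul_le_mul_of_nonneg_right h1 hl0.le
    have e1 : (-((∑ i, p i * F i) / l) + (∫ z, ⟪y (m z), z⟫ ∂ν - -((∫ z, F (m z) ∂ν) / l))) * l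
        = -(∑ i, p i * F i) + ((∫ z, ⟪y (m z), z⟫ ∂ν) * l + ∫ z, F (m z) ∂ν) := by
      field_simp
      ring
    rw [e1] at h3
    linarith
  set K := ∑ i, |∫ z, ⟪y i, z⟫ ∂ν| with hK
  have hK0 : 0 ≤ K := Finset.sum_nonneg fun i _ => abs_nonneg _
  -- weight of the independent plan used to repair the first marginal
  set δ := min (1 / 2) (ε / (2 * (|D| + K + 1))) with hδ
  have hδ0 : 0 < δ := by positivity
  have hδ1 : δ ≤ 1 / 2 := min_le_left _ _
  have hδ2 : δ * (|D| + K + 1) ≤ ε / 2 := by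
    calc δ * (|D| + K + 1) ≤ ε / (2 * (|D| + K + 1)) * (|D| + K + 1) :=
          mul_le_mul_of_nonneg_right (min_le_right _ _) (by positivity)
      _ = ε / 2 := by field_simp
  obtain ⟨i₀, -, hi₀⟩ := Finset.exists_min_image Finset.univ p Finset.univ_nonempty
  set η := min (ε / 2) (δ * p i₀) with hη
  have hη0 : 0 < η := lt_min (by positivity) (mul_pos hδ0 (hp _))
  obtain ⟨⟨q, c⟩, hq, hdist⟩ := Metric.mem_closure_iff.1 hcl η hη0
  rw [Prod.dist_eq, max_lt_iff] at hdist
  have hq' : ∀ i, |p i - q i| ≤ η := fun i => by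
    have := (dist_le_pi_dist p q i).trans hdist.1.le
    rwa [Real.dist_eq] at this
  have hc' : |D - c| ≤ η := by have := hdist.2.le; rwa [Real.dist_eq] at this
  have hq1 : ∑ i, q i = 1 := by
    obtain ⟨σ, hσ, -, hσq, -⟩ := hq
    have := integral_comp_finite (P := σ) (I := Prod.fst) (fun _ : ι => (1 : ℝ)) measurable_fst
    simpa [hσq] using this.symm
  set r : ι → ℝ := fun i => p i + (1 - δ) / δ * (p i - q i) with hr
  have hr0 : ∀ i, 0 ≤ r i := by
    intro i
    have h1 : η ≤ δ * p i :=
      (min_le_right _ _).trans (mul_le_mul_of_nonneg_left (hi₀ i (Finset.mem_univ i)) hδ0.le)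
    have h2 := (abs_le.1 (hq' i)).1
    have h3 : -(δ * p i) ≤ (1 - δ) * (p i - q i) := by nlinarith [hp i]
    have h4 : (1 - δ) / δ * (p i - q i) = (1 - δ) * (p i - q i) / δ := by ring
    have h5 : -(p i) ≤ (1 - δ) * (p i - q i) / δ := by
      rw [le_div_iff₀ hδ0]; linarith
    simp only [hr]; linarith
  have hr1 : ∑ i, r i = 1 := by
    simp only [hr, Finset.sum_add_distrib, ← Finset.mul_sum, Finset.sum_sub_distrib, hp1, hq1]
    ring
  have hmix := convex_planSet y hν hq (product_mem_planSet y hν hr0 hr1)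
    (by linarith : 0 ≤ 1 - δ) hδ0.le (by ring)
  have hrK : -K ≤ ∑ i, r i * ∫ z, ⟪y i, z⟫ ∂ν := by
    rw [hK, ← Finset.sum_neg_distrib]
    refine Finset.sum_le_sum fun i _ => ?_
    have h1 : r i ≤ 1 := by
      rw [← hr1]; exact Finset.single_le_sum (fun j _ => hr0 j) (Finset.mem_univ i)
    have h2 := neg_abs_le (∫ z, ⟪y i, z⟫ ∂ν)
    have h3 := abs_nonneg (∫ z, ⟪y i, z⟫ ∂ν)
    nlinarith [hr0 i]
  set B := ∑ i, r i * ∫ z, ⟪y i, z⟫ ∂ν with hB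
  have e : (1 - δ) • (q, c) + δ • (r, B) = (p, (1 - δ) * c + δ * B) := by
    ext i
    · simp only [hr, Prod.fst_add, Prod.smul_fst, Pi.add_apply, Pi.smul_apply, smul_eq_mul]
      field_simp
      ring
    · simp
  rw [e] at hmix
  refine planSet_mono hmix ?_
  have h1 : D - ε / 2 ≤ c := by
    have := (abs_le.1 hc').2
    have := min_le_left (ε / 2) (δ * p i₀)
    linarith
  have h2 := le_abs_self D
  nlinarith

end SemiDiscrete

/-! ### Correlations and the convex order -/

section Correlation

variable {E : Type*} [NormedAddCommGroup E] [InnerProductSpace ℝ E] [CompleteSpace E]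
  [SecondCountableTopology E] [MeasurableSpace E] [BorelSpace E]

/-- Quantization of a measure in `L²` by finitely many points, all charged. -/
lemma exists_quantization {ρ : Measure E} (hρ : IsP2 ρ) {δ : ℝ} (hδ : 0 < δ) :
    ∃ (T : Finset E) (I : E → T), Measurable I ∧ (∀ i, 0 < ρ.real (I ⁻¹' {i})) ∧
      ∫ x, ‖x - I x‖ ^ 2 ∂ρ ≤ δ ^ 2 := by
  classical
  obtain ⟨_, hid⟩ := isP2_iff_memLp.1 hρ
  obtain ⟨f, hf, hfL⟩ := hid.exists_simpleFunc_eLpNorm_sub_lt (by norm_num)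
    (ENNReal.ofReal_pos.2 hδ).ne'
  set T : Finset E := f.range.filter fun y => 0 < ρ.real (f ⁻¹' {y}) with hT
  have hae : ∀ᵐ x ∂ρ, f x ∈ T := by
    have h0 : ∀ y ∈ f.range, ∀ᵐ x ∂ρ, y ∉ T → f x ≠ y := by
      intro y hy
      by_cases hyT : y ∈ T
      · exact ae_of_all _ fun x h => absurd hyT h
      · have h1 : ρ.real (f ⁻¹' {y}) = 0 := by
          by_contra h
          exact hyT (Finset.mem_filter.2 ⟨hy, lt_of_le_of_ne measureReal_nonneg (Ne.symm h)⟩)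
        rw [measureReal_eq_zero_iff] at h1
        filter_upwards [compl_mem_ae_iff.2 h1] with x hx _ hxy
        exact hx hxy
    filter_upwards [(Finset.eventually_all f.range).2 h0] with x hx
    by_contra h
    exact hx (f x) (f.mem_range_self x) h rfl
  obtain ⟨x₀, hx₀⟩ := hae.exists
  let h : E → T := fun v => if hv : v ∈ T then ⟨v, hv⟩ else ⟨f x₀, hx₀⟩
  have hmeas : Measurable fun x => h (f x) := (f.map h).measurable
  refine ⟨T, fun x => h (f x), hmeas, ?_, ?_⟩
  · intro i
    refine (Finset.mem_filter.1 i.2).2.trans_le (measureReal_mono ?_)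
    intro x hx
    have hx : f x = i := hx
    show h (f x) = i
    simp [h, hx]
  · have e : ∫ x, ‖x - h (f x)‖ ^ 2 ∂ρ = ∫ x, ‖(id - ⇑f : E → E) x‖ ^ 2 ∂ρ := by
      refine integral_congr_ae ?_
      filter_upwards [hae] with x hx
      simp [h, hx]
    rw [e, ← norm_sq_toLp (hid.sub hfL), Lp.norm_toLp]
    exact pow_le_pow_left₀ ENNReal.toReal_nonneg (ENNReal.toReal_le_of_le_ofReal hδ.le hf.le) 2

/-- If `ζ` lies below `ν` in convex order, then any correlation `∫ ⟪x, z⟫` achieved by a coupling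
of `ρ` and `ζ` is achieved, up to `ε`, by a coupling of `ρ` and `ν`. After quantizing `ρ` this is
semidiscrete duality: dual potentials are convex, hence have a larger integral against `ν`. -/
lemma exists_coupling_of_convexOrder {ρ ζ ν : Measure E} (hρ : IsP2 ρ) (hζ : IsP2 ζ)
    (hν : IsP2 ν) (hζν : ConvexOrder ζ ν) {π : Measure (E × E)} (hπ : IsCoupling π ρ ζ)
    {ε : ℝ} (hε : 0 < ε) :
    ∃ π' : Measure (E × E), IsCoupling π' ρ ν ∧
      ∫ p, ⟪p.1, p.2⟫ ∂π - ε ≤ ∫ p, ⟪p.1, p.2⟫ ∂π' := by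
  have := hρ.isProb
  have := hζ.isProb
  have := hν.isProb
  have := hπ.isProb
  set S := √(∫ z, ‖z‖ ^ 2 ∂ζ) + √(∫ z, ‖z‖ ^ 2 ∂ν) with hS
  have hS0 : 0 ≤ S := by positivity
  set δ := ε / (2 * (S + 1)) with hδ
  have hδ0 : 0 < δ := by positivity
  have hδS : δ * S ≤ ε / 2 := by
    calc δ * S ≤ δ * (S + 1) := mul_le_mul_of_nonneg_left (by linarith) hδ0.le
      _ = ε / 2 := by rw [hδ]; field_simp
  obtain ⟨T, I, hI, hpos, hquant⟩ := exists_quantization hρ hδ0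
  let y : T → E := fun i => i
  obtain ⟨x₀⟩ : Nonempty E := inferInstance
  have : Nonempty T := ⟨I x₀⟩
  have hI1 : Measurable fun q : E × E => I q.1 := hI.comp measurable_fst
  have hreal : ∀ i, π.real ((fun q : E × E => I q.1) ⁻¹' {i}) = ρ.real (I ⁻¹' {i}) := by
    intro i
    rw [← hπ.2.1, map_measureReal_apply measurable_fst (hI (measurableSet_singleton i))]
    rfl
  have hp1 : ∑ i, ρ.real (I ⁻¹' {i}) = 1 := by
    have := integral_comp_finite (P := ρ) (fun _ : T => (1 : ℝ)) hI
    simpa using this.symm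
  have m1 := hπ.memLp_fst hρ
  have m2 := hπ.memLp_snd hζ
  have my : MemLp (fun q : E × E => y (I q.1)) 2 π := memLp_of_finite y hI1
  have iy := integrable_inner_of_memLp my m2
  have hquant' : √(∫ q, ‖q.1 - y (I q.1)‖ ^ 2 ∂π) ≤ δ := by
    rw [Real.sqrt_le_left hδ0.le]
    refine le_trans (le_of_eq ?_) hquant
    conv_rhs => rw [← hπ.2.1]
    rw [integral_map (by fun_prop) (by fun_prop)]
  have mζ : ∫ q, ‖q.2‖ ^ 2 ∂π = ∫ z, ‖z‖ ^ 2 ∂ζ := by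
    rw [← hπ.2.2, integral_map (by fun_prop) (by fun_prop)]
  have hdual := exists_plan_of_dual y hν hpos hp1 (D := ∫ q, ⟪y (I q.1), q.2⟫ ∂π) (by
    intro g m hm hmax
    set φ : E → ℝ := fun z => ⟪y (m z), z⟫ - g (m z) with hφ
    have hconv : ConvexOn ℝ Set.univ φ := by
      refine ⟨convex_univ, fun a _ b _ s r hs hr hsr => ?_⟩
      have h1 := mul_le_mul_of_nonneg_left (hmax (m (s • a + r • b)) a) hs
      have h2 := mul_le_mul_of_nonneg_left (hmax (m (s • a + r • b)) b) hr
      simp only [hφ, smul_eq_mul, inner_add_right, inner_smul_right]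
      have h3 : g (m (s • a + r • b)) = s * g (m (s • a + r • b)) + r * g (m (s • a + r • b)) := by
        rw [← add_mul, hsr, one_mul]
      linarith
    have hint : ∀ κ : Measure E, IsP2 κ → Integrable φ κ := by
      intro κ hκ
      have := hκ.isProb
      refine (integrable_inner_of_memLp (memLp_of_finite y hm) (isP2_iff_memLp.1 hκ).2).sub ?_
      exact (memLp_of_finite g hm).integrable (by norm_num)
    have h1 := hζν φ hconv (hint ζ hζ) (hint ν hν)
    have hφm : AEStronglyMeasurable φ (π.map Prod.snd) := by rw [hπ.2.2]; exact (hint ζ hζ).1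
    rw [← hπ.2.2, integral_map (by fun_prop) hφm] at h1
    have ig : Integrable (fun q : E × E => g (I q.1)) π :=
      (memLp_of_finite g hI1).integrable (by norm_num)
    have iφ : Integrable (fun q : E × E => φ q.2) π :=
      (integrable_map_measure hφm (by fun_prop)).1 (by rw [hπ.2.2]; exact hint ζ hζ)
    have h2 : ∫ q, (⟪y (I q.1), q.2⟫ - g (I q.1)) ∂π ≤ ∫ q, φ q.2 ∂π :=
      integral_mono (iy.sub ig) iφ fun q => hmax (I q.1) q.2
    rw [integral_sub iy ig, integral_comp_finite g hI1] at h2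
    simp only [hreal] at h2
    linarith) (half_pos hε)
  obtain ⟨σ, hσ, hσ2, hσ1, hσc⟩ := hdual
  have hIx : Measurable fun x => (I x, x) := hI.prodMk measurable_id
  have := Measure.isProbabilityMeasure_map (μ := ρ) hIx.aemeasurable
  obtain ⟨Γ, hΓ, g₁, g₂⟩ := exists_glue (ρ.map fun x => (I x, x)) σ (by
    rw [Measure.map_map measurable_fst hIx]
    refine Measure.ext_of_singleton fun i => ?_
    have h1 := hσ1 i
    rw [Measure.map_apply (measurable_fst.comp hIx) (measurableSet_singleton i),
      Measure.map_apply measurable_fst (measurableSet_singleton i)]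
    exact ((measureReal_eq_measureReal_iff).1 h1).symm)
  have l1 : Γ.map (fun p => p.2.1) = ρ := by
    have : Γ.map (fun p => p.2.1) = (Γ.map fun p => (p.1, p.2.1)).map Prod.snd := by
      rw [Measure.map_map (by fun_prop) (by fun_prop)]; rfl
    rw [this, g₁, Measure.map_map measurable_snd hIx]
    exact Measure.map_id
  have l2 : Γ.map (fun p => p.2.2) = ν := by
    rw [← hσ2, ← g₂, Measure.map_map (by fun_prop) (by fun_prop)]; rfl
  refine ⟨Γ.map fun p => (p.2.1, p.2.2), ?_, ?_⟩
  · have := IsCoupling.map_law (P := Γ) (X := fun p => p.2.1) (Y := fun p => p.2.2)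
      (by fun_prop) (by fun_prop)
    rwa [l1, l2] at this
  have n1 := memLp_of_law (by fun_prop) l1 hρ
  have n2 := memLp_of_law (by fun_prop) l2 hν
  have ny : MemLp (fun p : T × E × E => y p.1) 2 Γ := memLp_of_finite y measurable_fst
  rw [integral_map (by fun_prop) (by fun_prop)]
  have c1 := abs_integral_inner_le (m1.sub my) m2
  have c2 := abs_integral_inner_le (n1.sub ny) n2
  simp only [Pi.sub_apply, inner_sub_left] at c1 c2
  rw [integral_sub (integrable_inner_of_memLp m1 m2) iy, mζ] at c1
  have hν' : ∫ p, ‖p.2.2‖ ^ 2 ∂Γ = ∫ z, ‖z‖ ^ 2 ∂ν := by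
    rw [← l2, integral_map (by fun_prop) (by fun_prop)]
  rw [integral_sub (integrable_inner_of_memLp n1 n2) (integrable_inner_of_memLp ny n2), hν'] at c2
  have hyσ : ∫ q, ⟪y q.1, q.2⟫ ∂σ = ∫ p, ⟪y p.1, p.2.2⟫ ∂Γ := by
    rw [← g₂, integral_map (by fun_prop)]
    exact (g₂ ▸ integrable_plan y hν hσ2).1
  have hqΓ : √(∫ p, ‖p.2.1 - y p.1‖ ^ 2 ∂Γ) ≤ δ := by
    rw [Real.sqrt_le_left hδ0.le]
    refine le_trans (le_of_eq ?_) hquant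
    have hmeas : Measurable fun q : T × E => ‖q.2 - y q.1‖ ^ 2 := by fun_prop
    have h1 : ∫ q, ‖q.2 - y q.1‖ ^ 2 ∂(Γ.map fun p => (p.1, p.2.1))
        = ∫ p, ‖p.2.1 - y p.1‖ ^ 2 ∂Γ :=
      integral_map (by fun_prop) hmeas.aestronglyMeasurable
    rw [← h1, g₁, integral_map hIx.aemeasurable hmeas.aestronglyMeasurable]
  have d1 := mul_le_mul_of_nonneg_right hquant' (Real.sqrt_nonneg (∫ z, ‖z‖ ^ 2 ∂ζ))
  have d2 := mul_le_mul_of_nonneg_right hqΓ (Real.sqrt_nonneg (∫ z, ‖z‖ ^ 2 ∂ν))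
  have e1 := (abs_le.1 c1).2
  have e2 := (abs_le.1 c2).1
  have e3 : δ * S = δ * √(∫ z, ‖z‖ ^ 2 ∂ζ) + δ * √(∫ z, ‖z‖ ^ 2 ∂ν) := by rw [hS]; ring
  linarith

/-- The correlation bound in terms of `W₂`, for random variables `Y` and `Z` with the law of `Z`
below `ν` in convex order. -/
lemma W2sq_le_of_convexOrder {Ω : Type*} [MeasurableSpace Ω] {P : Measure Ω}
    [IsProbabilityMeasure P] {ρ ζ ν : Measure E} (hρ : IsP2 ρ) (hζ : IsP2 ζ) (hν : IsP2 ν)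
    (hζν : ConvexOrder ζ ν) {Y Z : Ω → E} (hY : Measurable Y) (hZ : Measurable Z)
    (lY : P.map Y = ρ) (lZ : P.map Z = ζ) :
    W2sq ρ ν ≤ ∫ ω, ‖Y ω‖ ^ 2 ∂P + ∫ z, ‖z‖ ^ 2 ∂ν - 2 * ∫ ω, ⟪Y ω, Z ω⟫ ∂P := by
  have hπ := IsCoupling.map_law (P := P) hY hZ
  rw [lY, lZ] at hπ
  refine le_of_forall_pos_le_add fun ε hε => ?_
  obtain ⟨π', h', hle⟩ := exists_coupling_of_convexOrder hρ hζ hν hζν hπ (half_pos hε)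
  rw [integral_map (by fun_prop) (by fun_prop)] at hle
  have := h'.isProb
  have h1 := integral_normSq_sub (h'.memLp_fst hρ) (h'.memLp_snd hν)
  have h2 := W2sq_le_of_law (P := π') measurable_fst measurable_snd
  rw [h'.2.1, h'.2.2] at h2
  have h3 : ∫ p, ‖p.1‖ ^ 2 ∂π' = ∫ ω, ‖Y ω‖ ^ 2 ∂P := by
    have a1 : ∫ p, ‖p.1‖ ^ 2 ∂π' = ∫ x, ‖x‖ ^ 2 ∂ρ := by
      rw [← h'.2.1, integral_map (by fun_prop) (by fun_prop)]
    rw [a1, ← lY, integral_map (by fun_prop) (by fun_prop)]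
  have h4 : ∫ p, ‖p.2‖ ^ 2 ∂π' = ∫ z, ‖z‖ ^ 2 ∂ν := by
    rw [← h'.2.2, integral_map (by fun_prop) (by fun_prop)]
  rw [h3, h4] at h1
  linarith

end Correlation

/-! ### Extrapolation, interpolation and uniqueness -/

section MainArgument

variable {E : Type*} [NormedAddCommGroup E] [InnerProductSpace ℝ E] [FiniteDimensional ℝ E]
  [MeasurableSpace E] [BorelSpace E]

lemma sq_W2 (μ ν : Measure E) : W2 μ ν ^ 2 = W2sq μ ν := Real.sq_sqrt (W2sq_nonneg μ ν)

/-- For an optimally coupled pair `(X, Z)` of `μ` and its backward projection, the vector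
`Y = c (X - Z)` is more correlated with `Z` than with any variable dominated by `ν`. -/
lemma IsBackwardProj.le_W2sq {Ω : Type*} [MeasurableSpace Ω] {P : Measure Ω}
    [IsProbabilityMeasure P] {ν μ ρ κ : Measure E} (hν : IsP2 ν) (hμ : IsP2 μ)
    (h : IsBackwardProj ν μ ρ) {X Z : Ω → E} (hX : Measurable X) (hZ : Measurable Z)
    (lX : P.map X = μ) (lZ : P.map Z = ρ) (hopt : ∫ ω, ‖Z ω - X ω‖ ^ 2 ∂P = W2sq ρ μ)
    (hκ : IsP2 κ) (hκν : ConvexOrder κ ν) {c : ℝ} (hc : 0 < c) {Y : Ω → E}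
    (hY : Y = fun ω => c • (X ω - Z ω)) :
    ∫ ω, ‖Y ω‖ ^ 2 ∂P + ∫ w, ‖w‖ ^ 2 ∂κ - 2 * ∫ ω, ⟪Y ω, Z ω⟫ ∂P ≤ W2sq (P.map Y) κ := by
  have mX := memLp_of_law hX lX hμ
  have mZ := memLp_of_law hZ lZ h.1
  have hYm : Measurable Y := by rw [hY]; fun_prop
  have mY : MemLp Y 2 P := by rw [hY]; exact (mX.sub mZ).const_smul c
  have hY2 := (isP2_map_iff hYm).2 mY
  obtain ⟨π, hπ, eπ⟩ := exists_optimal hY2 hκ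
  have := hπ.isProb
  have hYZ := IsCoupling.map_law (P := P) hYm hZ
  have := hYZ.isProb
  obtain ⟨Γ, hΓ, g₁, g₂⟩ := exists_glue _ π (hYZ.2.1.trans hπ.2.1.symm)
  have hYZm : Measurable fun ω => (Y ω, Z ω) := hYm.prodMk hZ
  -- `X` is recovered from `(Y, Z)`
  have hrec : ∀ ω, c⁻¹ • Y ω + Z ω = X ω := by
    intro ω
    simp only [hY]
    rw [smul_smul, inv_mul_cancel₀ hc.ne', one_smul, sub_add_cancel]
  have lX' : Γ.map (fun p => c⁻¹ • p.1 + p.2.1) = μ := by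
    have : Γ.map (fun p => c⁻¹ • p.1 + p.2.1)
        = (Γ.map fun p => (p.1, p.2.1)).map fun q => c⁻¹ • q.1 + q.2 := by
      rw [Measure.map_map (by fun_prop) (by fun_prop)]; rfl
    rw [this, g₁, Measure.map_map (by fun_prop) hYZm, ← lX]
    exact congrArg (fun f => P.map f) (funext hrec)
  have lZ' : Γ.map (fun p => p.2.1) = ρ := by
    rw [← lZ, ← hYZ.2.2, ← g₁, Measure.map_map (by fun_prop) (by fun_prop)]; rfl
  have lY' : Γ.map (fun p => p.1) = P.map Y := by
    rw [← hYZ.2.1, ← g₁, Measure.map_map (by fun_prop) (by fun_prop)]; rfl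
  have lW' : Γ.map (fun p => p.2.2) = κ := by
    rw [← hπ.2.2, ← g₂, Measure.map_map (by fun_prop) (by fun_prop)]; rfl
  have hopt' : ∫ p, ‖p.2.1 - (c⁻¹ • p.1 + p.2.1)‖ ^ 2 ∂Γ = W2sq ρ μ := by
    have e : ∫ q, ‖q.2 - (c⁻¹ • q.1 + q.2)‖ ^ 2 ∂(Γ.map fun p => (p.1, p.2.1))
        = ∫ p, ‖p.2.1 - (c⁻¹ • p.1 + p.2.1)‖ ^ 2 ∂Γ := integral_map (by fun_prop) (by fun_prop)
    rw [← e, g₁, integral_map hYZm.aemeasurable (by fun_prop), ← hopt]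
    simp only [hrec]
  have key := h.integral_inner_nonpos (P := Γ) hν hμ (X := fun p => c⁻¹ • p.1 + p.2.1)
    (Z := fun p => p.2.1) (W := fun p => p.2.2) (by fun_prop) (by fun_prop) (by fun_prop) lX' lZ'
    hopt' (lW'.symm ▸ hκ) (lW'.symm ▸ hκν)
  have nY := memLp_of_law (by fun_prop) lY' hY2
  have nZ := memLp_of_law (by fun_prop) lZ' h.1
  have nW := memLp_of_law (by fun_prop) lW' hκ
  simp only [add_sub_cancel_right, real_inner_smul_left, integral_const_mul] at key
  simp only [inner_sub_right] at key
  rw [integral_sub (integrable_inner_of_memLp nY nW) (integrable_inner_of_memLp nY nZ)] at key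
  have key' : ∫ p, ⟪p.1, p.2.2⟫ ∂Γ ≤ ∫ p, ⟪p.1, p.2.1⟫ ∂Γ := by
    have := nonpos_of_mul_nonpos_right key (inv_pos.2 hc)
    linarith
  have e1 : ∫ p, ⟪p.1, p.2.1⟫ ∂Γ = ∫ ω, ⟪Y ω, Z ω⟫ ∂P := by
    have e : ∫ q, ⟪q.1, q.2⟫ ∂(Γ.map fun p => (p.1, p.2.1)) = ∫ p, ⟪p.1, p.2.1⟫ ∂Γ :=
      integral_map (by fun_prop) (by fun_prop)
    rw [← e, g₁, integral_map hYZm.aemeasurable (by fun_prop)]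
  have e2 : ∫ p, ‖p.1‖ ^ 2 ∂Γ = ∫ ω, ‖Y ω‖ ^ 2 ∂P := by
    have e : ∫ x, ‖x‖ ^ 2 ∂(Γ.map fun p => p.1) = ∫ p, ‖p.1‖ ^ 2 ∂Γ :=
      integral_map (by fun_prop) (by fun_prop)
    rw [← e, lY', integral_map hYm.aemeasurable (by fun_prop)]
  have e3 : ∫ p, ‖p.2.2‖ ^ 2 ∂Γ = ∫ w, ‖w‖ ^ 2 ∂κ := by
    rw [← lW', integral_map (by fun_prop) (by fun_prop)]
  have e4 : ∫ p, ‖p.1 - p.2.2‖ ^ 2 ∂Γ = W2sq (P.map Y) κ := by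
    rw [← eπ, ← g₂, integral_map_cost (by fun_prop) (by fun_prop)]
  have e5 := integral_normSq_sub nY nW
  rw [e4, e2, e3] at e5
  linarith

/-- Completing the square in `v`; the minimiser of the left-hand side is `t u - (t - 1) z`. -/
lemma extrap_square (t : ℝ) (u z v : E) :
    t * ‖v - u‖ ^ 2 - (t - 1) * (‖v‖ ^ 2 - 2 * ⟪v, z⟫)
      = t * ‖(t • u - (t - 1) • z) - u‖ ^ 2
        - (t - 1) * (‖t • u - (t - 1) • z‖ ^ 2 - 2 * ⟪t • u - (t - 1) • z, z⟫)
        + ‖v - (t • u - (t - 1) • z)‖ ^ 2 := by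
  simp only [← real_inner_self_eq_norm_sq, inner_sub_left, inner_sub_right, inner_smul_left,
    inner_smul_right, conj_trivial, real_inner_comm u z, real_inner_comm u v, real_inner_comm z v]
  ring

/-- Let `(X, Z)` be an optimal pair for the backward projection of the dilation of `ν₁`. Every
optimal plan from `ν₁` to a metric extrapolation is the law of `(θ X, (t - 1) (X - Z))`. -/
lemma optimal_eq {Ω : Type*} [MeasurableSpace Ω] {P : Measure Ω}
    [IsProbabilityMeasure P] {ν₀ ν₁ ρE ρP μ : Measure E} {t : ℝ} (ht : 1 < t)
    (hν₀ : IsP2 ν₀) (hν₁ : IsP2 ν₁) (hρE : IsMetricExtrap t ν₀ ν₁ ρE) (hμ : IsP2 μ)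
    (hρP : IsBackwardProj ν₀ μ ρP) {X Z X₁ Y : Ω → E} (hX : Measurable X) (hZ : Measurable Z)
    (lX : P.map X = μ) (lZ : P.map Z = ρP) (hopt : ∫ ω, ‖Z ω - X ω‖ ^ 2 ∂P = W2sq ρP μ)
    (hX₁ : X₁ = fun ω => ((t - 1) / t) • X ω) (l₁ : P.map X₁ = ν₁)
    (hY : Y = fun ω => (t - 1) • (X ω - Z ω))
    {π : Measure (E × E)} (hπ : IsCoupling π ν₁ ρE)
    (eπ : ∫ p, ‖p.1 - p.2‖ ^ 2 ∂π = W2sq ν₁ ρE) :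
    π = P.map fun ω => (X₁ ω, Y ω) := by
  have ht0 : 0 < t := by linarith
  have ht1 : 0 < t - 1 := by linarith
  have mX := memLp_of_law hX lX hμ
  have mZ := memLp_of_law hZ lZ hρP.1
  have hYm : Measurable Y := by rw [hY]; fun_prop
  have hX₁m : Measurable X₁ := by rw [hX₁]; fun_prop
  have mX₁ := memLp_of_law hX₁m l₁ hν₁
  have mY : MemLp Y 2 P := by rw [hY]; exact (mX.sub mZ).const_smul _
  have hY2 := (isP2_map_iff hYm).2 mY
  have hYe : ∀ ω, t • X₁ ω - (t - 1) • Z ω = Y ω := by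
    intro ω
    simp only [hX₁, hY]
    rw [smul_smul, mul_div_cancel₀ _ ht0.ne', smul_sub]
  -- upper bound on the functional at the law of `Y`
  have hup := hρP.le_W2sq hν₀ hμ hX hZ lX lZ hopt hν₀ (fun _ _ _ _ => le_rfl) ht1 hY
  have hup' := W2sq_le_of_law (P := P) hYm hX₁m
  rw [l₁] at hup'
  have hmin := hρE.2 _ hY2
  have hρE2 := hρE.1
  -- lower bound on the functional at `ρE`, on a space carrying `π` and the law of `(X₁, Z)`
  have := hπ.isProb
  have hα := IsCoupling.map_law (P := P) hX₁m hZ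
  have := hα.isProb
  have hαm : Measurable fun ω => (X₁ ω, Z ω) := hX₁m.prodMk hZ
  obtain ⟨Γ, hΓ, g₁, g₂⟩ := exists_glue _ π ((hα.2.1.trans l₁).trans hπ.2.1.symm)
  have k1 : Γ.map (fun p => p.1) = ν₁ := by
    rw [← hπ.2.1, ← g₂, Measure.map_map (by fun_prop) (by fun_prop)]; rfl
  have kZ : Γ.map (fun p => p.2.1) = ρP := by
    rw [← lZ, ← hα.2.2, ← g₁, Measure.map_map (by fun_prop) (by fun_prop)]; rfl
  have kV : Γ.map (fun p => p.2.2) = ρE := by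
    rw [← hπ.2.2, ← g₂, Measure.map_map (by fun_prop) (by fun_prop)]; rfl
  have n1 := memLp_of_law (by fun_prop) k1 hν₁
  have nZ := memLp_of_law (by fun_prop) kZ hρP.1
  have nV := memLp_of_law (by fun_prop) kV hρE2
  have nY : MemLp (fun p : E × E × E => t • p.1 - (t - 1) • p.2.1) 2 Γ :=
    (n1.const_smul t).sub (nZ.const_smul (t - 1))
  have hlow := W2sq_le_of_convexOrder hρE2 hρP.1 hν₀ hρP.2.1 (P := Γ) (Y := fun p => p.2.2)
    (Z := fun p => p.2.1) (by fun_prop) (by fun_prop) kV kZ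
  have hcost : ∫ p, ‖p.2.2 - p.1‖ ^ 2 ∂Γ = W2sq ρE ν₁ := by
    rw [W2sq_comm, ← eπ, ← g₂, integral_map_cost (by fun_prop) (by fun_prop)]
    simp_rw [norm_sub_rev]
  have i1 := integrable_normSq (nV.sub n1)
  have i2 := integrable_normSq nV
  have i3 := integrable_inner_of_memLp nV nZ
  have i4 := integrable_normSq (nY.sub n1)
  have i5 := integrable_normSq nY
  have i6 := integrable_inner_of_memLp nY nZ
  have i7 := integrable_normSq (nV.sub nY)
  simp only [Pi.sub_apply] at i1 i4 i7
  have j1 : Integrable (fun p : E × E × E => ‖p.2.2‖ ^ 2 - 2 * ⟪p.2.2, p.2.1⟫) Γ :=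
    i2.sub (i3.const_mul 2)
  have j2 : Integrable (fun p : E × E × E => ‖t • p.1 - (t - 1) • p.2.1‖ ^ 2
      - 2 * ⟪t • p.1 - (t - 1) • p.2.1, p.2.1⟫) Γ := i5.sub (i6.const_mul 2)
  have j3 : Integrable (fun p : E × E × E => t * ‖(t • p.1 - (t - 1) • p.2.1) - p.1‖ ^ 2
      - (t - 1) * (‖t • p.1 - (t - 1) • p.2.1‖ ^ 2
        - 2 * ⟪t • p.1 - (t - 1) • p.2.1, p.2.1⟫)) Γ :=
    (i4.const_mul t).sub (j2.const_mul (t - 1))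
  have hsq : t * ∫ p, ‖p.2.2 - p.1‖ ^ 2 ∂Γ
      - (t - 1) * (∫ p, ‖p.2.2‖ ^ 2 ∂Γ - 2 * ∫ p, ⟪p.2.2, p.2.1⟫ ∂Γ)
      = t * ∫ p, ‖(t • p.1 - (t - 1) • p.2.1) - p.1‖ ^ 2 ∂Γ
        - (t - 1) * (∫ p, ‖t • p.1 - (t - 1) • p.2.1‖ ^ 2 ∂Γ
          - 2 * ∫ p, ⟪t • p.1 - (t - 1) • p.2.1, p.2.1⟫ ∂Γ)
        + ∫ p, ‖p.2.2 - (t • p.1 - (t - 1) • p.2.1)‖ ^ 2 ∂Γ := by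
    rw [← integral_const_mul, ← integral_const_mul, ← integral_const_mul, ← integral_const_mul,
      ← integral_sub i2 (i3.const_mul 2), ← integral_sub i5 (i6.const_mul 2),
      ← integral_const_mul, ← integral_const_mul,
      ← integral_sub (i1.const_mul t) (j1.const_mul (t - 1)),
      ← integral_sub (i4.const_mul t) (j2.const_mul (t - 1)),
      ← integral_add j3 i7]
    exact integral_congr_ae (ae_of_all _ fun p => extrap_square t p.1 p.2.1 p.2.2)
  have tr : ∀ f : E × E → ℝ, Continuous f → ∫ p, f (p.1, p.2.1) ∂Γ = ∫ ω, f (X₁ ω, Z ω) ∂P := by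
    intro f hf
    have e : ∫ q, f q ∂(Γ.map fun p => (p.1, p.2.1)) = ∫ p, f (p.1, p.2.1) ∂Γ :=
      integral_map (by fun_prop) hf.aestronglyMeasurable
    rw [← e, g₁, integral_map hαm.aemeasurable hf.aestronglyMeasurable]
  have t1 := tr (fun q => ‖(t • q.1 - (t - 1) • q.2) - q.1‖ ^ 2) (by fun_prop)
  have t2 := tr (fun q => ‖t • q.1 - (t - 1) • q.2‖ ^ 2) (by fun_prop)
  have t3 := tr (fun q => ⟪t • q.1 - (t - 1) • q.2, q.2⟫) (by fun_prop)
  simp only [hYe] at t1 t2 t3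
  rw [t1, t2, t3, hcost] at hsq
  have hmin' : t * W2sq ρE ν₁ - (t - 1) * W2sq ρE ν₀
      ≤ t * W2sq (P.map Y) ν₁ - (t - 1) * W2sq (P.map Y) ν₀ := by
    have e : ∀ a b : ℝ, a / (2 * (t - 1)) - b / (2 * t)
        = (t * a - (t - 1) * b) / (2 * (t - 1) * t) := by
      intro a b; field_simp
    rw [e, e] at hmin
    exact (div_le_div_iff_of_pos_right (by positivity)).1 hmin
  have q1 := mul_le_mul_of_nonneg_left hup' ht0.le
  have q2 := mul_le_mul_of_nonneg_left hup ht1.le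
  have q3 := mul_le_mul_of_nonneg_left hlow ht1.le
  have hzero : ∫ p, ‖p.2.2 - (t • p.1 - (t - 1) • p.2.1)‖ ^ 2 ∂Γ = 0 := by
    refine le_antisymm ?_ (integral_nonneg fun _ => by positivity)
    linarith
  have hae := (integral_eq_zero_iff_of_nonneg (fun _ => by positivity) i7).1 hzero
  rw [← g₂]
  have e1 : Γ.map (fun p => (p.1, p.2.2)) = Γ.map fun p => (p.1, t • p.1 - (t - 1) • p.2.1) := by
    refine Measure.map_congr ?_
    filter_upwards [hae] with p hp
    have : p.2.2 = t • p.1 - (t - 1) • p.2.1 := by simpa [sub_eq_zero] using hp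
    rw [this]
  have e2 : Γ.map (fun p => (p.1, t • p.1 - (t - 1) • p.2.1))
      = (Γ.map fun p => (p.1, p.2.1)).map fun q => (q.1, t • q.1 - (t - 1) • q.2) := by
    rw [Measure.map_map (by fun_prop) (by fun_prop)]; rfl
  rw [e1, e2, g₁, Measure.map_map (by fun_prop) hαm]
  exact congrArg (fun f => P.map f) (funext fun ω => by simp [hYe])

/-- Linear interpolation along an optimal plan is a constant-speed geodesic. -/
lemma isGeodesic_interp {Ω : Type*} [MeasurableSpace Ω] {P : Measure Ω}
    [IsProbabilityMeasure P] {Z Y : Ω → E} (hZ : Measurable Z) (hY : Measurable Y)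
    (mZ : MemLp Z 2 P) (mY : MemLp Y 2 P) {t : ℝ} (ht : 0 < t)
    (hopt : ∫ ω, ‖Z ω - Y ω‖ ^ 2 ∂P ≤ W2sq (P.map Z) (P.map Y)) :
    IsGeodesic 0 t fun s => P.map fun ω => Z ω + (s / t) • (Y ω - Z ω) := by
  have hm : ∀ s : ℝ, Measurable fun ω => Z ω + (s / t) • (Y ω - Z ω) := fun s => by fun_prop
  have hp : ∀ s : ℝ, IsP2 (P.map fun ω => Z ω + (s / t) • (Y ω - Z ω)) := fun s =>
    (isP2_map_iff (hm s)).2 (mZ.add ((mY.sub mZ).const_smul (s / t)))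
  set γ : ℝ → Measure E := fun s => P.map fun ω => Z ω + (s / t) • (Y ω - Z ω) with hγ
  have γ0 : γ 0 = P.map Z := by simp [hγ]
  have γt : γ t = P.map Y := by simp [hγ, div_self ht.ne']
  set D := W2 (γ 0) (γ t) with hD
  have hD0 : 0 ≤ D := Real.sqrt_nonneg _
  have hub : ∀ s₁ s₂, W2 (γ s₁) (γ s₂) ≤ |s₁ - s₂| / t * D := by
    intro s₁ s₂
    have h1 := W2sq_le_of_law (P := P) (hm s₁) (hm s₂)
    have e : ∀ ω, Z ω + (s₁ / t) • (Y ω - Z ω) - (Z ω + (s₂ / t) • (Y ω - Z ω))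
        = ((s₂ - s₁) / t) • (Z ω - Y ω) := by intro ω; module
    simp only [e, norm_smul, mul_pow, integral_const_mul, Real.norm_eq_abs, sq_abs] at h1
    refine Real.sqrt_le_iff.2 ⟨by positivity, h1.trans ?_⟩
    rw [mul_pow, hD, sq_W2, γ0, γt, div_pow, div_pow, sq_abs,
      show (s₁ - s₂) ^ 2 = (s₂ - s₁) ^ 2 by ring]
    exact mul_le_mul_of_nonneg_left hopt (by positivity)
  have hsym : ∀ s₁ s₂, W2 (γ s₁) (γ s₂) = W2 (γ s₂) (γ s₁) := fun s₁ s₂ => by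
    rw [W2, W2, W2sq_comm]
  have hlb : ∀ s₁ s₂, 0 ≤ s₁ → s₁ ≤ s₂ → s₂ ≤ t → (s₂ - s₁) / t * D ≤ W2 (γ s₁) (γ s₂) := by
    intro s₁ s₂ h0 h12 h2
    have a1 := W2_triangle (hp s₁) (hp 0) (hp t)
    have a2 := W2_triangle (hp s₂) (hp s₁) (hp t)
    have b1 := hub 0 s₁
    have b2 := hub s₂ t
    rw [zero_sub, abs_neg, abs_of_nonneg h0] at b1
    rw [abs_sub_comm, abs_of_nonneg (by linarith : 0 ≤ t - s₂)] at b2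
    have e : (s₂ - s₁) / t * D = D - s₁ / t * D - (t - s₂) / t * D := by field_simp; ring
    rw [e]
    linarith
  refine ⟨fun s _ => hp s, fun s₁ h₁ s₂ h₂ => ?_⟩
  rw [sub_zero]
  refine le_antisymm (hub s₁ s₂) ?_
  rcases le_total s₁ s₂ with h | h
  · rw [abs_sub_comm, abs_of_nonneg (by linarith : 0 ≤ s₂ - s₁)]
    exact hlb s₁ s₂ h₁.1 h h₂.2
  · rw [abs_of_nonneg (by linarith : 0 ≤ s₁ - s₂)]
    exact (hlb s₂ s₁ h₂.1 h h₁.2).trans_eq (hsym _ _)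

/-- Every point of a geodesic, before or after time `1`, is the linear inter- or extrapolation of
some optimal plan between its values at times `1` and `t`. -/
lemma IsGeodesic.exists_optimal_map {t : ℝ} (ht : 1 < t) {γ : ℝ → Measure E}
    (h : IsGeodesic 0 t γ) {s : ℝ} (hs : s ∈ Set.Icc 0 t) :
    ∃ π : Measure (E × E), IsCoupling π (γ 1) (γ t) ∧
      ∫ p, ‖p.1 - p.2‖ ^ 2 ∂π = W2sq (γ 1) (γ t) ∧
      γ s = π.map fun p => p.1 + ((s - 1) / (t - 1)) • (p.2 - p.1) := by
  have ht1 : t - 1 ≠ 0 := by linarith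
  have m1 : (1 : ℝ) ∈ Set.Icc 0 t := ⟨by norm_num, ht.le⟩
  have mt : t ∈ Set.Icc 0 t := ⟨by linarith, le_rfl⟩
  set k := (W2 (γ 0) (γ t) / t) ^ 2 with hk
  have hd : ∀ s₁ ∈ Set.Icc 0 t, ∀ s₂ ∈ Set.Icc 0 t,
      W2sq (γ s₁) (γ s₂) = (s₂ - s₁) ^ 2 * k := by
    intro s₁ h₁ s₂ h₂
    rw [← sq_W2, h.2 s₁ h₁ s₂ h₂, hk, mul_pow, div_pow, div_pow, sq_abs, sub_zero]
    ring
  have hk0 : 0 ≤ k := by positivity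
  rcases le_total s 1 with hs1 | hs1
  · obtain ⟨Γ, hΓ, l₂, l₁, l₃, hal, -, e, -⟩ := exists_aligned (h.1 s hs) (h.1 1 m1) (h.1 t mt)
      (a := 1 - s) (b := t - 1) (k := k) (by linarith) (by linarith) hk0
      (by rw [hd 1 m1 s hs]; ring) (hd 1 m1 t mt) (by rw [hd s hs t mt]; ring)
    have hπ := IsCoupling.map_law (P := Γ) (X := fun p => p.1) (Y := fun p => p.2.2)
      (by fun_prop) (by fun_prop)
    rw [l₂, l₃] at hπ
    refine ⟨_, hπ, ?_, ?_⟩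
    · rw [integral_map_cost (by fun_prop) (by fun_prop), e]
    · rw [Measure.map_map (by fun_prop) (by fun_prop), ← l₁]
      refine Measure.map_congr ?_
      filter_upwards [hal] with p hp
      have h1 : (t - 1) • p.2.1
          = (t - 1) • (p.1 + ((s - 1) / (t - 1)) • (p.2.2 - p.1)) := by
        rw [smul_add, smul_smul, mul_div_cancel₀ _ ht1, ← sub_eq_zero, ← hp]
        module
      exact smul_right_injective E ht1 h1
  · obtain ⟨Γ, hΓ, l₂, l₁, l₃, hal, -, -, e⟩ := exists_aligned (h.1 1 m1) (h.1 s hs) (h.1 t mt)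
      (a := s - 1) (b := t - s) (k := k) (by linarith) (by linarith [hs.2]) hk0
      (by rw [hd s hs 1 m1]; ring) (hd s hs t mt) (by rw [hd 1 m1 t mt]; ring)
    have hπ := IsCoupling.map_law (P := Γ) (X := fun p => p.2.1) (Y := fun p => p.2.2)
      (by fun_prop) (by fun_prop)
    rw [l₁, l₃] at hπ
    refine ⟨_, hπ, ?_, ?_⟩
    · rw [integral_map_cost (by fun_prop) (by fun_prop), e]
    · rw [Measure.map_map (by fun_prop) (by fun_prop), ← l₂]
      refine Measure.map_congr ?_
      filter_upwards [hal] with p hp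
      have h1 : (t - 1) • p.1
          = (t - 1) • (p.2.1 + ((s - 1) / (t - 1)) • (p.2.2 - p.2.1)) := by
        rw [smul_add, smul_smul, mul_div_cancel₀ _ ht1, eq_comm, ← sub_eq_zero, ← hp]
        module
      exact smul_right_injective E ht1 h1

/-- The result in an arbitrary finite-dimensional inner product space. -/
theorem extrapolation_geodesic {ν₀ ν₁ ρE ρP : Measure E} {t θ : ℝ} (ht : 1 < t)
    (hθ : θ = (t - 1) / t) (hν₀ : IsP2 ν₀) (hν₁ : IsP2 ν₁) (hρE : IsMetricExtrap t ν₀ ν₁ ρE)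
    (hρP : IsBackwardProj ν₀ (ν₁.map (fun x => (1 / θ) • x)) ρP) :
    ∃ γ : ℝ → Measure E, IsGeodesic 0 t γ ∧ γ 0 = ρP ∧ γ 1 = ν₁ ∧ γ t = ρE ∧
      ∀ γ' : ℝ → Measure E, IsGeodesic 0 t γ' → γ' 1 = ν₁ → γ' t = ρE →
        ∀ s ∈ Set.Icc (0 : ℝ) t, γ' s = γ s := by
  have ht0 : 0 < t := by linarith
  have ht1 : 0 < t - 1 := by linarith
  have hθ0 : θ ≠ 0 := by rw [hθ]; positivity
  have := hν₁.isProb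
  have hμ : IsP2 (ν₁.map (fun x => (1 / θ) • x)) :=
    (isP2_map_iff (by fun_prop)).2 ((isP2_iff_memLp.1 hν₁).2.const_smul (1 / θ))
  obtain ⟨P, hP, eP⟩ := exists_optimal hρP.1 hμ
  have := hP.isProb
  have mX := hP.memLp_snd hμ
  have mZ := hP.memLp_fst hρP.1
  let X₁ : E × E → E := fun p => ((t - 1) / t) • p.2
  let Y : E × E → E := fun p => (t - 1) • (p.2 - p.1)
  have hX₁m : Measurable X₁ := by fun_prop
  have hYm : Measurable Y := by fun_prop
  have mY : MemLp Y 2 P := (mX.sub mZ).const_smul (t - 1)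
  have l₁ : P.map X₁ = ν₁ := by
    have e : P.map X₁ = (P.map Prod.snd).map fun x => ((t - 1) / t) • x := by
      rw [Measure.map_map (by fun_prop) (by fun_prop)]; rfl
    rw [e, hP.2.2, Measure.map_map (by fun_prop) (by fun_prop), ← hθ]
    convert Measure.map_id using 2
    ext1 x
    simp [smul_smul, hθ0]
  have huniq : ∀ π : Measure (E × E), IsCoupling π ν₁ ρE →
      ∫ p, ‖p.1 - p.2‖ ^ 2 ∂π = W2sq ν₁ ρE → π = P.map fun p => (X₁ p, Y p) :=
    fun π hπ eπ => optimal_eq ht hν₀ hν₁ hρE hμ hρP measurable_snd measurable_fst hP.2.2 hP.2.1 eP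
      rfl l₁ rfl hπ eπ
  have lY : P.map Y = ρE := by
    obtain ⟨π, hπ, eπ⟩ := exists_optimal hν₁ hρE.1
    rw [← hπ.2.2, huniq π hπ eπ, Measure.map_map (by fun_prop) (by fun_prop)]
    rfl
  have hopt : ∫ p, ‖p.1 - Y p‖ ^ 2 ∂P ≤ W2sq (P.map Prod.fst) (P.map Y) := by
    have h1 := hρP.le_W2sq hν₀ hμ measurable_snd measurable_fst hP.2.2 hP.2.1 eP hρP.1 hρP.2.1 ht1
      (Y := Y) rfl
    have h2 := integral_normSq_sub mY mZ
    have h3 : ∫ w, ‖w‖ ^ 2 ∂ρP = ∫ p, ‖p.1‖ ^ 2 ∂P := by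
      rw [← hP.2.1, integral_map (by fun_prop) (by fun_prop)]
    rw [W2sq_comm, hP.2.1]
    simp_rw [norm_sub_rev _ (Y _)]
    rw [h2, ← h3]
    exact h1
  refine ⟨fun s => P.map fun p => p.1 + (s / t) • (Y p - p.1),
    isGeodesic_interp measurable_fst hYm mZ mY ht0 hopt, ?_, ?_, ?_, ?_⟩
  · simp only [zero_div, zero_smul, add_zero]
    exact hP.2.1
  · rw [← l₁]
    refine congrArg (fun f => P.map f) (funext fun p => ?_)
    have : t • (p.1 + (1 / t) • (Y p - p.1)) = t • X₁ p := by
      simp only [X₁, Y, smul_add, smul_smul, mul_div_cancel₀ _ ht0.ne']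
      module
    exact smul_right_injective E ht0.ne' this
  · rw [← lY]
    refine congrArg (fun f => P.map f) (funext fun p => ?_)
    simp [div_self ht0.ne']
  · intro γ' hγ' h1 ht' s hs
    obtain ⟨π, hπ, eπ, es⟩ := hγ'.exists_optimal_map ht hs
    rw [h1, ht'] at hπ eπ
    rw [es, huniq π hπ eπ, Measure.map_map (by fun_prop) (by fun_prop)]
    refine congrArg (fun f => P.map f) (funext fun p => ?_)
    have e1 : X₁ p = p.1 + (1 / t) • (Y p - p.1) := by
      apply smul_right_injective E ht0.ne'
      simp only [X₁, Y, smul_add, smul_smul, mul_div_cancel₀ _ ht0.ne']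
      module
    have e2 : Y p - X₁ p = ((t - 1) / t) • (Y p - p.1) := by
      rw [e1]
      apply smul_right_injective E ht0.ne'
      simp only [smul_add, smul_sub, smul_smul, mul_div_cancel₀ _ ht0.ne']
      module
    simp only [Function.comp_apply]
    rw [e2, smul_smul, div_mul_div_cancel₀ ht1.ne', e1, add_assoc, ← add_smul, ← add_div]
    congr 3
    ring

end MainArgument

end Extrapolation

/-- the metric extrapolation and the backward projection lie on a unique
minimizing geodesic through `ν₁`. -/
theorem stmt15 {d : ℕ} (hd : 1 ≤ d) (t : ℝ) (ht : 1 < t)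
    (θ : ℝ) (hθ : θ = (t - 1) / t)
    (ν₀ ν₁ ρE ρP : Measure (EuclideanSpace ℝ (Fin d)))
    (hν₀ : IsP2 ν₀) (hν₁ : IsP2 ν₁)
    (hρE : IsMetricExtrap t ν₀ ν₁ ρE)
    (hρP : IsBackwardProj ν₀ (ν₁.map (fun x => (1 / θ) • x)) ρP) :
    ∃ γ : ℝ → Measure (EuclideanSpace ℝ (Fin d)),
      IsGeodesic 0 t γ ∧ γ 0 = ρP ∧ γ 1 = ν₁ ∧ γ t = ρE ∧
      ∀ γ' : ℝ → Measure (EuclideanSpace ℝ (Fin d)),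
        IsGeodesic 0 t γ' → γ' 1 = ν₁ → γ' t = ρE →
        ∀ s ∈ Set.Icc (0 : ℝ) t, γ' s = γ s := by
  exact extrapolation_geodesic ht hθ hν₀ hν₁ hρE hρP

end
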